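/- Let φ be a pair potential satisfying conditions (I) and (S), and let μ ∈ M¹_fm(Γ) be such that the correlation measure ρ_μ is absolutely continuous with respect to the Lebesgue-Poisson measure λ_z and the correlation function k_μ satisfies the Ruelle bound for some C > 0. Then Ĥ(B_bs(Γ₀)) ⊂ L¹(Γ₀, ρ_μ), and consequently the Glauber generator H maps FP_bc(Γ) into L¹(Γ, μ). -/

import Mathlib

open MeasureTheory
open scoped BigOperators ENNReal Classical

noncomputable section

/-- The one-particle space `ℝ^d`. -/
abbrev Rd (d : ℕ) : Type := Fin d → ℝ

/-- The configuration space `Γ`: all locally finite subsets of `ℝ^d`. -/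
def Config (d : ℕ) : Type :=
  {γ : Set (Rd d) // ∀ K : Set (Rd d), IsCompact K → (γ ∩ K).Finite}

variable {d : ℕ}

namespace Config

/-- `γ ∪ {x}`. -/
def insertPt (γ : Config d) (x : Rd d) : Config d :=
  ⟨insert x γ.1, fun K hK => ((γ.2 K hK).insert x).subset (by
      rintro y ⟨hy, hyK⟩
      rcases Set.mem_insert_iff.mp hy with h | h
      · exact Set.mem_insert_iff.mpr (Or.inl h)
      · exact Set.mem_insert_iff.mpr (Or.inr ⟨h, hyK⟩))⟩

/-- `γ ∖ {x}`. -/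
def erasePt (γ : Config d) (x : Rd d) : Config d :=
  ⟨γ.1 \ {x}, fun K hK => (γ.2 K hK).subset (fun _ hy => ⟨hy.1.1, hy.2⟩)⟩

/-- A finite configuration, viewed as an element of `Γ`. -/
def ofFinset (η : Finset (Rd d)) : Config d :=
  ⟨(η : Set (Rd d)), fun _ _ => η.finite_toSet.subset Set.inter_subset_left⟩

/-- The local restriction `γ_Λ := γ ∩ Λ`. -/
def restrict (γ : Config d) (Λ : Set (Rd d)) : Config d :=
  ⟨γ.1 ∩ Λ, fun K hK => (γ.2 K hK).subset (fun _ hy => ⟨hy.1.1, hy.2⟩)⟩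

end Config

/-- The σ-algebra on the space `Γ₀` of finite configurations, generated by the
counting maps `η ↦ |η ∩ A|`, `A` measurable. -/
instance : MeasurableSpace (Finset (Rd d)) :=
  MeasurableSpace.generateFrom
    {S | ∃ (A : Set (Rd d)) (n : ℕ), MeasurableSet A ∧
      S = {η : Finset (Rd d) | ((η : Set (Rd d)) ∩ A).ncard = n}}

/-- The Borel σ-algebra on `Γ`, generated by the counting maps `γ ↦ |γ ∩ A|`. -/
instance : MeasurableSpace (Config d) :=
  MeasurableSpace.generateFrom
    {S | ∃ (A : Set (Rd d)) (n : ℕ), MeasurableSet A ∧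
      S = {γ : Config d | (γ.1 ∩ A).ncard = n}}

/-- The Lebesgue–Poisson measure `λ_z = Σ_n (zⁿ/n!) m⁽ⁿ⁾` on `Γ₀`, where `m⁽ⁿ⁾` is the
image of Lebesgue measure on `(ℝ^d)ⁿ` under `(x₁,…,xₙ) ↦ {x₁,…,xₙ}`. -/
def lambdaLP (d : ℕ) (z : ℝ) : Measure (Finset (Rd d)) :=
  Measure.sum fun n : ℕ =>
    (ENNReal.ofReal (z ^ n / n.factorial)) •
      Measure.map (fun x : Fin n → Rd d => Finset.image x Finset.univ) volume

/-- The `⋆`-convolution `(G₁ ⋆ G₂)(η) = Σ_{(η₁,η₂,η₃)∈P₃(η)} G₁(η₁∪η₂) G₂(η₂∪η₃)`,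
the sum running over all ordered partitions of `η` into three (possibly empty) parts. -/
def starConv {M : Type*} [NonUnitalNonAssocSemiring M]
    (G₁ G₂ : Finset (Rd d) → M) (η : Finset (Rd d)) : M :=
  ∑ η₁ ∈ η.powerset, ∑ η₂ ∈ (η \ η₁).powerset,
    G₁ (η₁ ∪ η₂) * G₂ (η₂ ∪ ((η \ η₁) \ η₂))

/-- The `K`-transform `(KG)(γ) = Σ_{η ⋐ γ} G(η)`. -/
def Ktrans {M : Type*} [AddCommMonoid M] [TopologicalSpace M]
    (G : Finset (Rd d) → M) (γ : Config d) : M :=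
  ∑' η : {η : Finset (Rd d) // (η : Set (Rd d)) ⊆ γ.1}, G η.1

/-- `B_bs(Γ₀)`: bounded measurable functions on `Γ₀` with bounded support. -/
def BddSupp (G : Finset (Rd d) → ℝ) : Prop :=
  Measurable G ∧ ∃ (L : ℝ) (N : ℕ) (Λ : Set (Rd d)), IsCompact Λ ∧
    (∀ η, |G η| ≤ L) ∧
    (∀ η : Finset (Rd d), ¬((η : Set (Rd d)) ⊆ Λ ∧ η.card ≤ N) → G η = 0)

/-- A pair potential `φ : ℝ^d → ℝ ∪ {+∞}`, symmetric and real-valued away from `0`. -/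
structure PairPotential (d : ℕ) where
  toFun : Rd d → EReal
  measurable' : Measurable toFun
  symm' : ∀ x, toFun (-x) = toFun x
  finite_off_zero' : ∀ x, x ≠ 0 → toFun x ≠ ⊤
  ne_bot' : ∀ x, toFun x ≠ ⊥

/-- `e^{-a}` for `a ∈ ℝ ∪ {+∞}`, with `e^{-∞} := 0`. -/
def expNegE (a : EReal) : ℝ :=
  if a = ⊤ then 0 else Real.exp (-a.toReal)

/-- The energy `E(η) = Σ_{{x,y}⊂η} φ(x-y)` of a finite configuration. -/
def pairEnergy (V : PairPotential d) (η : Finset (Rd d)) : ℝ :=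
  (1 / 2) * ∑ x ∈ η, ∑ y ∈ η.erase x, (V.toFun (x - y)).toReal

/-- Stability (S): `E(η) ≥ -B|η|` for all finite configurations `η`. -/
def Stable (V : PairPotential d) (B : ℝ) : Prop :=
  0 ≤ B ∧ ∀ η : Finset (Rd d), -B * η.card ≤ pairEnergy V η

/-- Integrability (I): `∫ |1 - e^{-φ(x)}| dx < ∞`. -/
def CondI (V : PairPotential d) : Prop :=
  ∫⁻ x : Rd d, ENNReal.ofReal |1 - expNegE (V.toFun x)| < ⊤

/-- Lower regularity (LR): the interaction energy between two disjoint finite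
configurations is bounded below by `-Σ a(x-y)` for some nonnegative integrable `a`. -/
def LowerRegular (V : PairPotential d) : Prop :=
  ∃ a : Rd d → ℝ, Measurable a ∧ (∀ x, 0 ≤ a x) ∧
    (∫⁻ x : Rd d, ENNReal.ofReal (a x) < ⊤) ∧
    ∀ η₁ η₂ : Finset (Rd d), Disjoint η₁ η₂ →
      -(∑ x ∈ η₁, ∑ y ∈ η₂, a (x - y)) ≤ ∑ x ∈ η₁, ∑ y ∈ η₂, (V.toFun (x - y)).toReal

/-- The relative energy `E(x,η) = Σ_{y∈η} φ(x-y)` of a point w.r.t. a finite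
configuration, with values in `ℝ ∪ {±∞}`. -/
def relEnergyF (V : PairPotential d) (x : Rd d) (η : Finset (Rd d)) : EReal :=
  ∑ y ∈ η, V.toFun (x - y)

/-- `e^{-E(x,γ)}` for a general (possibly infinite) configuration `γ`: if the series
`Σ_{y∈γ} φ(x-y)` is (absolutely) convergent this is the exponential of minus its sum,
and otherwise `E(x,γ) := +∞`, i.e. `e^{-E(x,γ)} := 0`. -/
def expNegRelEnergy (V : PairPotential d) (x : Rd d) (γ : Set (Rd d)) : ℝ :=
  if (∀ y ∈ γ, V.toFun (x - y) ≠ ⊤) ∧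
      Summable (fun y : γ => |(V.toFun (x - (y : Rd d))).toReal|)
  then Real.exp (-∑' y : γ, (V.toFun (x - (y : Rd d))).toReal)
  else 0

/-- The Glauber generator:
`(HF)(γ) = -Σ_{x∈γ}(F(γ∖{x})-F(γ)) - z ∫ e^{-E(x,γ)} (F(γ∪{x})-F(γ)) dx`. -/
def glauber (V : PairPotential d) (z : ℝ) (F : Config d → ℝ) (γ : Config d) : ℝ :=
  -((∑' x : γ.1, (F (γ.erasePt x) - F γ)) +
    z * ∫ x : Rd d, expNegRelEnergy V x γ.1 * (F (γ.insertPt x) - F γ))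

/-- `Ĥ := K⁻¹ H K` on quasi-observables, via `(K⁻¹F)(η) = Σ_{ξ⊂η} (-1)^{|η∖ξ|} F(ξ)`. -/
def hatH (V : PairPotential d) (z : ℝ) (G : Finset (Rd d) → ℝ)
    (η : Finset (Rd d)) : ℝ :=
  ∑ ξ ∈ η.powerset, (-1 : ℝ) ^ (η.card - ξ.card) *
    glauber V z (Ktrans G) (Config.ofFinset ξ)

/-- `M¹_fm(Γ)`: probability measures on `Γ` with finite local moments of all orders. -/
def HasFiniteLocalMoments (μ : Measure (Config d)) : Prop :=
  IsProbabilityMeasure μ ∧ ∀ (n : ℕ) (Λ : Set (Rd d)), IsCompact Λ →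
    ∫⁻ γ : Config d, ((γ.1 ∩ Λ).ncard : ℝ≥0∞) ^ n ∂μ < ⊤

/-- `ρ = K*μ` is the correlation measure of `μ`:
`∫_{Γ₀} G dρ = ∫_Γ (KG) dμ` for every positive measurable `G` with bounded support. -/
def IsCorrelationMeasure (μ : Measure (Config d)) (ρ : Measure (Finset (Rd d))) : Prop :=
  ∀ G : Finset (Rd d) → ℝ≥0∞, Measurable G →
    (∃ (N : ℕ) (Λ : Set (Rd d)), IsCompact Λ ∧
      ∀ η : Finset (Rd d), ¬((η : Set (Rd d)) ⊆ Λ ∧ η.card ≤ N) → G η = 0) →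
    ∫⁻ η, G η ∂ρ =
      ∫⁻ γ, (∑' η : {η : Finset (Rd d) // (η : Set (Rd d)) ⊆ γ.1}, G η.1) ∂μ

/-- The Georgii–Nguyen–Zessin characterization: `μ` is a Gibbs measure for the pair
potential `φ` and activity `z`. -/
def IsGibbs (V : PairPotential d) (z : ℝ) (μ : Measure (Config d)) : Prop :=
  ∀ H : Rd d → Config d → ℝ≥0∞, Measurable (Function.uncurry H) →
    ∫⁻ γ, ∑' x : γ.1, H x γ ∂μ =
      ENNReal.ofReal z *
        ∫⁻ γ, ∫⁻ x, H x (γ.insertPt x) *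
          ENNReal.ofReal (expNegRelEnergy V x γ.1) ∂(volume : Measure (Rd d)) ∂μ

/-- The Kirkwood–Salsburg equation for a correlation function `k`. -/
def SatisfiesKS (V : PairPotential d) (z : ℝ) (k : Finset (Rd d) → ℝ) : Prop :=
  ∀ᵐ p ∂((lambdaLP d z).prod (volume : Measure (Rd d))),
    k (insert p.2 p.1) =
      expNegE (relEnergyF V p.2 p.1) *
        ∫ ρ, (∏ y ∈ ρ, (expNegE (V.toFun (p.2 - y)) - 1)) * k (p.1 ∪ ρ) ∂(lambdaLP d z)

end

/-!
The decisive quantities are dominated by Lebesgue–Poisson exponentials `lpExp w η = ∏ y ∈ η, w y`.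
If `|G| ≤ lpExp w` and `f = |e^{-φ} - 1|`, then `e^{-φ(x-y)} (1 + w y) ≤ (1 + f(x-y)) (1 + w y)`,
and the right-hand side is `1 + w_x y` with `w_x y = (1 + f(x-y)) w y + f(x-y)`. Multiplying over
`y ∈ γ` bounds the birth rate `e^{-E(x,γ)} (KG(γ ∪ {x}) - KG(γ))` by `w x * K(lpExp w_x) γ`, and
its inverse `K`-transform by `w x * lpExp w_x`. The same function therefore dominates `Ĥ G` on `Γ₀`
and, after a `K`-transform, `H K G` on `Γ`. Under the Ruelle bound the exponential `lpExp w_x` has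
integral at most `exp(z (1 + C ∫ w_x))`, which is bounded uniformly in `x` because
`∫ w_x ≤ ∫ w + (1 + sup w) ∫ f`.
-/

noncomputable section

open scoped NNReal

section Rank

variable {α β : Type*} [LinearOrder β]

/-- The position of `x` in the subset `s` of `α`, listed in increasing order of `e`. -/
def rankIn (e : α → β) (s : Set α) (x : α) : ℕ :=
  (s ∩ e ⁻¹' Set.Iio (e x)).ncard

variable {e : α → β} {s : Set α}

theorem rankIn_lt_ncard (hs : s.Finite) {x : α} (hx : x ∈ s) : rankIn e s x < s.ncard :=
  Set.ncard_lt_ncard ⟨Set.inter_subset_left, fun h => lt_irrefl _ (h hx).2⟩ hs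

theorem rankIn_lt_rankIn (hs : s.Finite) {x y : α} (hx : x ∈ s) (hxy : e x < e y) :
    rankIn e s x < rankIn e s y :=
  Set.ncard_lt_ncard ⟨fun _ hw => ⟨hw.1, lt_trans hw.2 hxy⟩,
    fun h => lt_irrefl _ (h ⟨hx, hxy⟩).2⟩ (hs.subset Set.inter_subset_left)

theorem injOn_rankIn (he : Function.Injective e) (hs : s.Finite) : Set.InjOn (rankIn e s) s := by
  intro x hx y hy hxy
  by_contra hne
  rcases lt_or_gt_of_ne (he.ne hne) with h | h
  · exact (rankIn_lt_rankIn hs hx h).ne hxy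
  · exact (rankIn_lt_rankIn hs hy h).ne' hxy

theorem image_rankIn (he : Function.Injective e) (hs : s.Finite) :
    rankIn e s '' s = Set.Iio s.ncard := by
  refine Set.eq_of_subset_of_ncard_le ?_ ?_ (Set.finite_Iio _)
  · rintro _ ⟨x, hx, rfl⟩
    exact rankIn_lt_ncard hs hx
  · rw [(injOn_rankIn he hs).ncard_image, Set.ncard_Iio_nat]

theorem exists_le_rankIn_eq_iff (he : Function.Injective e) (hs : s.Finite) (t : β) (n : ℕ) :
    (∃ x ∈ s, e x ≤ t ∧ rankIn e s x = n) ↔ n < (s ∩ e ⁻¹' Set.Iic t).ncard := by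
  have hrank {x : α} (hx : e x ≤ t) : rankIn e (s ∩ e ⁻¹' Set.Iic t) x = rankIn e s x := by
    rw [rankIn, Set.inter_assoc, ← Set.preimage_inter, Set.inter_eq_self_of_subset_right
      (Set.Iio_subset_Iic_self.trans (Set.Iic_subset_Iic.2 hx)), rankIn]
  rw [← Set.mem_Iio, ← image_rankIn he (hs.subset Set.inter_subset_left)]
  constructor
  · rintro ⟨x, hx, hxt, rfl⟩
    exact ⟨x, ⟨hx, hxt⟩, hrank hxt⟩
  · rintro ⟨x, ⟨hx, hxt⟩, rfl⟩
    exact ⟨x, hx, hxt, (hrank hxt).symm⟩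

end Rank

variable {d : ℕ}

/-! ### A measurable enumeration of the points of a configuration -/

namespace Config

theorem measurable_ncard_inter {A : Set (Rd d)} (hA : MeasurableSet A) :
    Measurable fun γ : Config d => (γ.1 ∩ A).ncard :=
  measurable_to_countable' fun n => MeasurableSpace.measurableSet_generateFrom ⟨A, n, hA, rfl⟩

theorem measurable_ofFinset : Measurable (ofFinset (d := d)) := by
  refine measurable_generateFrom ?_
  rintro S ⟨A, n, hA, rfl⟩
  exact MeasurableSpace.measurableSet_generateFrom ⟨A, n, hA, rfl⟩

/-- The points of `ℝ^d` whose norm has integer part `j`: the bounded pieces along which the points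
of a configuration are enumerated. -/
def shell (d j : ℕ) : Set (Rd d) := {x | ⌊‖x‖⌋₊ = j}

theorem measurableSet_shell (j : ℕ) : MeasurableSet (shell d j) :=
  (Nat.measurable_floor.comp measurable_norm) (measurableSet_singleton j)

theorem finite_inter_shell (γ : Config d) (j : ℕ) : (γ.1 ∩ shell d j).Finite := by
  refine (γ.2 (Metric.closedBall 0 (j + 1)) (isCompact_closedBall _ _)).subset ?_
  rintro x ⟨hx, rfl⟩
  exact ⟨hx, by simpa using (Nat.lt_floor_add_one ‖x‖).le⟩

/-- The label of the point `x` of `γ`: its shell, and its rank among the points of `γ` there, in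
the order pulled back from `ℝ` by a measurable embedding. -/
def code (γ : Config d) (x : Rd d) : ℕ × ℕ :=
  (⌊‖x‖⌋₊, rankIn (embeddingReal (Rd d)) (γ.1 ∩ shell d ⌊‖x‖⌋₊) x)

/-- The labels in use in `γ`. -/
def indices (γ : Config d) : Set (ℕ × ℕ) := γ.code '' γ.1

/-- The point of `γ` with label `i`; it has a meaning only for `i ∈ γ.indices`. -/
def pt (γ : Config d) (i : ℕ × ℕ) : Rd d := Function.invFunOn γ.code γ.1 i

theorem embeddingReal_injective : Function.Injective (embeddingReal (Rd d)) :=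
  (measurableEmbedding_embeddingReal _).injective

theorem injOn_code (γ : Config d) : Set.InjOn γ.code γ.1 := by
  intro x hx y hy hxy
  obtain ⟨hnorm, hrank⟩ := Prod.ext_iff.1 hxy
  simp only [code] at hnorm hrank
  rw [hnorm] at hrank
  exact injOn_rankIn embeddingReal_injective (γ.finite_inter_shell _) ⟨hx, hnorm⟩ ⟨hy, rfl⟩ hrank

theorem bijOn_pt (γ : Config d) : Set.BijOn γ.pt γ.indices γ.1 := by
  have h := γ.injOn_code.bijOn_image
  exact h.symm h.invOn_invFunOn.symm

theorem exists_le_code_eq_iff (γ : Config d) (i : ℕ × ℕ) (t : ℝ) :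
    (∃ x ∈ γ.1, embeddingReal (Rd d) x ≤ t ∧ γ.code x = i) ↔
      i.2 < (γ.1 ∩ (shell d i.1 ∩ embeddingReal (Rd d) ⁻¹' Set.Iic t)).ncard := by
  rw [← Set.inter_assoc,
    ← exists_le_rankIn_eq_iff embeddingReal_injective (γ.finite_inter_shell i.1)]
  constructor
  · rintro ⟨x, hx, hxt, rfl⟩
    exact ⟨x, ⟨hx, rfl⟩, hxt, rfl⟩
  · rintro ⟨x, ⟨hx, hxi⟩, hxt, hrank⟩
    have hnorm : ⌊‖x‖⌋₊ = i.1 := hxi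
    exact ⟨x, hx, hxt, Prod.ext hnorm (by rw [code, hnorm]; exact hrank)⟩

theorem measurableSet_exists_le_code_eq (i : ℕ × ℕ) (t : ℝ) :
    MeasurableSet {γ : Config d | ∃ x ∈ γ.1, embeddingReal (Rd d) x ≤ t ∧ γ.code x = i} := by
  simp only [exists_le_code_eq_iff]
  exact measurable_ncard_inter ((measurableSet_shell _).inter
    ((measurableEmbedding_embeddingReal _).measurable measurableSet_Iic)) measurableSet_Ioi

theorem measurableSet_mem_indices (i : ℕ × ℕ) : MeasurableSet {γ : Config d | i ∈ γ.indices} := by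
  have : {γ : Config d | i ∈ γ.indices} =
      ⋃ n : ℕ, {γ | ∃ x ∈ γ.1, embeddingReal (Rd d) x ≤ n ∧ γ.code x = i} := by
    ext γ
    simp only [indices, Set.mem_image, Set.mem_ofPred_eq, Set.mem_iUnion]
    constructor
    · rintro ⟨x, hx, hxi⟩
      obtain ⟨n, hn⟩ := exists_nat_ge (embeddingReal (Rd d) x)
      exact ⟨n, x, hx, hn, hxi⟩
    · rintro ⟨-, x, hx, -, hxi⟩
      exact ⟨x, hx, hxi⟩
  rw [this]
  exact MeasurableSet.iUnion fun n => measurableSet_exists_le_code_eq i n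

theorem embeddingReal_pt_le_iff {γ : Config d} {i : ℕ × ℕ} (hi : i ∈ γ.indices) (t : ℝ) :
    embeddingReal (Rd d) (γ.pt i) ≤ t ↔
      ∃ x ∈ γ.1, embeddingReal (Rd d) x ≤ t ∧ γ.code x = i := by
  constructor
  · exact fun h => ⟨γ.pt i, Function.invFunOn_mem hi, h, Function.invFunOn_eq hi⟩
  · rintro ⟨x, hx, hxt, rfl⟩
    rwa [pt, γ.injOn_code.leftInvOn_invFunOn hx]

theorem measurable_pt (i : ℕ × ℕ) : Measurable fun γ : Config d => γ.pt i := by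
  have he := measurableEmbedding_embeddingReal (Rd d)
  rw [← he.measurable_comp_iff]
  have hpt (γ : Config d) (hi : i ∉ γ.indices) : γ.pt i = Classical.choice ⟨0⟩ :=
    Function.invFunOn_neg hi
  refine measurable_of_Iic fun t => ?_
  have hset : (embeddingReal (Rd d) ∘ fun γ => γ.pt i) ⁻¹' Set.Iic t =
      {γ : Config d | i ∈ γ.indices}.ite
        {γ | ∃ x ∈ γ.1, embeddingReal (Rd d) x ≤ t ∧ γ.code x = i}
        {_γ | embeddingReal (Rd d) (Classical.choice ⟨0⟩) ≤ t} := by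
    ext γ
    by_cases hi : i ∈ γ.indices
    · simp [Set.ite, hi, embeddingReal_pt_le_iff]
    · simp [Set.ite, hi, hpt]
  rw [hset]
  exact (measurableSet_mem_indices i).ite (measurableSet_exists_le_code_eq i t)
    (MeasurableSet.const _)

@[to_additive]
theorem tprod_eq_tprod_pt {M : Type*} [CommMonoid M] [TopologicalSpace M] (γ : Config d)
    (h : Rd d → M) :
    ∏' y : γ.1, h y = ∏' i : ℕ × ℕ, if i ∈ γ.indices then h (γ.pt i) else 1 := by
  rw [← γ.bijOn_pt.equiv.tprod_eq fun y : γ.1 => h y]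
  exact tprod_subtype γ.indices fun i => h (γ.pt i)

end Config

theorem bijOn_finset_image {α β : Type*} [DecidableEq β] {f : α → β} {s : Set α} {t : Set β}
    (h : Set.BijOn f s t) :
    Set.BijOn (Finset.image f) {I | (I : Set α) ⊆ s} {J | (J : Set β) ⊆ t} := by
  refine ⟨fun I hI => ?_, fun I hI J hJ hIJ => ?_, fun J hJ => ?_⟩
  · rw [Set.mem_ofPred_eq, Finset.coe_image]
    exact (Set.image_mono hI).trans h.mapsTo.image_subset
  · have := congrArg ((↑) : Finset β → Set β) hIJ
    rw [Finset.coe_image, Finset.coe_image, h.injOn.image_eq_image_iff hI hJ] at this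
    exact Finset.coe_injective this
  · obtain ⟨I, hI, hIJ⟩ := Finset.subset_set_image_iff.1 (hJ.trans h.image_eq.ge)
    exact ⟨I, hI, hIJ⟩

namespace Config

theorem Ktrans_eq_tsum_pt {M : Type*} [AddCommMonoid M] [TopologicalSpace M]
    (G : Finset (Rd d) → M) (γ : Config d) :
    Ktrans G γ =
      ∑' I : Finset (ℕ × ℕ), if (I : Set (ℕ × ℕ)) ⊆ γ.indices then G (I.image γ.pt) else 0 := by
  refine ((bijOn_finset_image γ.bijOn_pt).equiv.tsum_eq fun η => G η.1).symm.trans ?_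
  refine (tsum_subtype {I : Finset (ℕ × ℕ) | (I : Set (ℕ × ℕ)) ⊆ γ.indices}
    fun I => G (I.image γ.pt)).trans ?_
  simp only [Set.indicator, Set.mem_ofPred_eq]

theorem measurableSet_mem : MeasurableSet {p : Rd d × Config d | p.1 ∈ p.2.1} := by
  have : {p : Rd d × Config d | p.1 ∈ p.2.1} =
      ⋃ i, {p | i ∈ p.2.indices ∧ p.2.pt i = p.1} := by
    ext ⟨x, γ⟩
    simp only [Set.mem_ofPred_eq, Set.mem_iUnion, ← γ.bijOn_pt.image_eq, Set.mem_image]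
  rw [this]
  exact MeasurableSet.iUnion fun i => (measurable_snd (measurableSet_mem_indices i)).inter
    (measurableSet_eq_fun ((measurable_pt i).comp measurable_snd) measurable_fst)

section Parametrized

variable {X M : Type*} [MeasurableSpace X] [TopologicalSpace M]
  [TopologicalSpace.IsCompletelyPseudoMetrizableSpace M] [SecondCountableTopology M]
  [MeasurableSpace M] [BorelSpace M] {g : X → Config d}

@[to_additive]
theorem measurable_tprod_points [CommMonoid M] [MeasurableMul₂ M] (hg : Measurable g)
    {h : X → Rd d → M} (hh : Measurable (Function.uncurry h)) :
    Measurable fun p => ∏' y : (g p).1, h p y := by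
  simp only [tprod_eq_tprod_pt]
  exact Measurable.tprod fun i => Measurable.ite (hg (measurableSet_mem_indices i))
    (hh.comp (measurable_id.prodMk ((measurable_pt i).comp hg))) measurable_const

end Parametrized

end Config

theorem measurable_finset_ncard_inter {A : Set (Rd d)} (hA : MeasurableSet A) :
    Measurable fun η : Finset (Rd d) => ((η : Set (Rd d)) ∩ A).ncard :=
  (Config.measurable_ncard_inter hA).comp Config.measurable_ofFinset

theorem measurable_finset_card : Measurable fun η : Finset (Rd d) => η.card := by
  simpa using measurable_finset_ncard_inter (d := d) MeasurableSet.univ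

theorem measurableSet_coe_subset {A : Set (Rd d)} (hA : MeasurableSet A) :
    MeasurableSet {η : Finset (Rd d) | (η : Set (Rd d)) ⊆ A} := by
  have : {η : Finset (Rd d) | (η : Set (Rd d)) ⊆ A} =
      {η : Finset (Rd d) | ((η : Set (Rd d)) ∩ Aᶜ).ncard = 0} := by
    ext η
    rw [Set.mem_ofPred_eq, Set.mem_ofPred_eq,
      Set.ncard_eq_zero (η.finite_toSet.subset Set.inter_subset_left),
      ← Set.disjoint_iff_inter_eq_empty, Set.disjoint_compl_right_iff_subset]
  rw [this]
  exact measurable_finset_ncard_inter hA.compl (measurableSet_singleton 0)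

theorem ncard_insert_inter (A : Set (Rd d)) (x : Rd d) (η : Finset (Rd d)) :
    (((insert x η : Finset (Rd d)) : Set (Rd d)) ∩ A).ncard =
      (if x ∈ A ∧ x ∉ η then 1 else 0) + ((η : Set (Rd d)) ∩ A).ncard := by
  rw [Finset.coe_insert]
  by_cases hxA : x ∈ A
  · rw [Set.insert_inter_of_mem hxA]
    by_cases hxη : x ∈ η
    · rw [Set.insert_eq_of_mem (show x ∈ (η : Set (Rd d)) ∩ A from ⟨hxη, hxA⟩)]
      simp [hxη]
    · rw [Set.ncard_insert_of_notMem (fun h => hxη h.1)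
        (η.finite_toSet.subset Set.inter_subset_left)]
      simp [hxA, hxη, add_comm]
  · simp [Set.insert_inter_of_notMem hxA, hxA]

theorem measurable_finset_insert :
    Measurable fun p : Rd d × Finset (Rd d) => insert p.1 p.2 := by
  refine measurable_generateFrom ?_
  rintro S ⟨A, n, hA, rfl⟩
  have hmem : MeasurableSet {p : Rd d × Finset (Rd d) | p.1 ∈ p.2} :=
    (measurable_fst.prodMk (Config.measurable_ofFinset.comp measurable_snd))
      Config.measurableSet_mem
  have hcard : Measurable fun p : Rd d × Finset (Rd d) =>
      (((insert p.1 p.2 : Finset (Rd d)) : Set (Rd d)) ∩ A).ncard := by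
    simp only [ncard_insert_inter]
    exact (Measurable.ite ((measurable_fst hA).inter hmem.compl) measurable_const
      measurable_const).add ((measurable_finset_ncard_inter hA).comp measurable_snd)
  exact hcard (measurableSet_singleton n)

theorem measurable_finset_image {X ι : Type*} [MeasurableSpace X] {f : ι → X → Rd d}
    (hf : ∀ i, Measurable (f i)) (I : Finset ι) : Measurable fun x => I.image fun i => f i x := by
  induction I using Finset.induction_on with
  | empty => simp only [Finset.image_empty, measurable_const]
  | insert i I _ ih =>
    simp only [Finset.image_insert]
    exact measurable_finset_insert.comp ((hf i).prodMk ih)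

theorem measurable_Ktrans {X M : Type*} [MeasurableSpace X] [AddCommMonoid M] [TopologicalSpace M]
    [TopologicalSpace.IsCompletelyPseudoMetrizableSpace M] [SecondCountableTopology M]
    [MeasurableSpace M] [BorelSpace M] [MeasurableAdd₂ M] {g : X → Config d} (hg : Measurable g)
    {G : X → Finset (Rd d) → M} (hG : Measurable (Function.uncurry G)) :
    Measurable fun p => Ktrans (G p) (g p) := by
  simp only [Config.Ktrans_eq_tsum_pt]
  refine Measurable.tsum fun I => Measurable.ite ?_ (hG.comp (measurable_id.prodMk
    (measurable_finset_image (fun i => (Config.measurable_pt i).comp hg) I))) measurable_const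
  have : {p | (I : Set (ℕ × ℕ)) ⊆ (g p).indices} = ⋂ i ∈ I, g ⁻¹' {γ | i ∈ γ.indices} := by
    ext p
    simp [Set.subset_def]
  rw [this]
  exact I.measurableSet_biInter fun i _ => hg (Config.measurableSet_mem_indices i)

theorem Ktrans_lintegral {X : Type*} [MeasurableSpace X] {ν : Measure X}
    {F : X → Finset (Rd d) → ℝ≥0∞} (hF : ∀ η, Measurable fun x => F x η) (γ : Config d) :
    Ktrans (fun η => ∫⁻ x, F x η ∂ν) γ = ∫⁻ x, Ktrans (F x) γ ∂ν := by
  simp only [Config.Ktrans_eq_tsum_pt]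
  rw [lintegral_tsum fun I => (Measurable.ite (MeasurableSet.const _) (hF _)
    measurable_const).aemeasurable]
  refine tsum_congr fun I => ?_
  split_ifs <;> simp

/-! ### Lebesgue–Poisson exponentials -/

/-- The Lebesgue–Poisson exponential `e_λ(w, η) = ∏_{y ∈ η} w y`. -/
def lpExp (w : Rd d → ℝ≥0∞) (η : Finset (Rd d)) : ℝ≥0∞ := ∏ y ∈ η, w y

theorem lpExp_mono {v w : Rd d → ℝ≥0∞} {η : Finset (Rd d)} (h : ∀ y ∈ η, v y ≤ w y) :
    lpExp v η ≤ lpExp w η :=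
  Finset.prod_le_prod' h

theorem measurable_lpExp_param {X : Type*} [MeasurableSpace X] {w : X → Rd d → ℝ≥0∞}
    (hw : Measurable (Function.uncurry w)) :
    Measurable fun p : X × Finset (Rd d) => lpExp (w p.1) p.2 := by
  have hprod (p : X × Finset (Rd d)) :
      lpExp (w p.1) p.2 = ∏' y : (Config.ofFinset p.2).1, w p.1 y :=
    (Finset.tprod_subtype p.2 (w p.1)).symm
  simp only [hprod]
  exact Config.measurable_tprod_points (Config.measurable_ofFinset.comp measurable_snd)
    (hw.comp (measurable_fst.fst.prodMk measurable_snd))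

theorem measurable_lpExp {w : Rd d → ℝ≥0∞} (hw : Measurable w) : Measurable (lpExp w) :=
  (measurable_lpExp_param (w := fun _ : Unit => w) (hw.comp measurable_snd)).comp
    (measurable_prodMk_left (x := ()))

theorem measurable_mul_lpExp {X : Type*} [MeasurableSpace X] {v : X → ℝ≥0∞} (hv : Measurable v)
    {w : X → Rd d → ℝ≥0∞} (hw : Measurable (Function.uncurry w)) :
    Measurable fun p : Finset (Rd d) × X => v p.2 * lpExp (w p.2) p.1 :=
  (hv.comp measurable_snd).mul ((measurable_lpExp_param hw).comp measurable_swap)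

section Pi

variable {E : Type*} [MeasurableSpace E] (ν : Measure E) [SigmaFinite ν]

theorem lintegral_pi_prod_eq_pow {g : E → ℝ≥0∞} (hg : Measurable g) (n : ℕ) :
    ∫⁻ x, ∏ i, g (x i) ∂Measure.pi (fun _ : Fin n => ν) = (∫⁻ y, g y ∂ν) ^ n := by
  induction n with
  | zero => simp
  | succ n ih =>
    have hprod : Measurable fun x : Fin n → E => ∏ i, g (x i) :=
      Finset.measurable_fun_prod _ fun i _ => hg.comp (measurable_pi_apply i)
    have hcomp := (measurePreserving_piFinSuccAbove (fun _ : Fin (n + 1) => ν) 0).lintegral_comp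
      ((hg.comp measurable_fst).mul (hprod.comp measurable_snd))
    rw [pow_succ', ← ih, ← lintegral_prod_mul hg.aemeasurable hprod.aemeasurable]
    refine Eq.trans (lintegral_congr fun x => ?_) hcomp
    rw [Fin.prod_univ_succ]
    rfl

theorem ae_injective_pi [MeasurableEq E] [NullSingletonClass ν] (n : ℕ) :
    ∀ᵐ x ∂Measure.pi (fun _ : Fin n => ν), Function.Injective x := by
  induction n with
  | zero => exact .of_forall fun x i => i.elim0
  | succ n ih =>
    have hne : ∀ᵐ p ∂ν.prod (Measure.pi fun _ : Fin n => ν), ∀ i, p.2 i ≠ p.1 := by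
      refine ae_all_iff.2 fun i => ?_
      have hi : Measurable fun p : E × (Fin n → E) => p.2 i :=
        (measurable_pi_apply i).comp measurable_snd
      refine (Measure.ae_prod_iff_ae_ae (measurableSet_eq_fun hi measurable_fst).compl).2 ?_
      refine .of_forall fun x => ?_
      filter_upwards [measure_eq_zero_iff_ae_notMem.1
        (Measure.pi_hyperplane (fun _ => ν) i x)] with y hy using hy
    have hinj := (Measure.quasiMeasurePreserving_snd (μ := ν)).ae ih
    filter_upwards [(measurePreserving_piFinSuccAbove
      (fun _ : Fin (n + 1) => ν) 0).quasiMeasurePreserving.ae (hne.and hinj)] with x hx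
    rw [← Fin.cons_self_tail x, Fin.cons_injective_iff]
    exact ⟨fun ⟨i, hi⟩ => hx.1 i hi, hx.2⟩

end Pi

theorem lintegral_lpExp_image_le {g : Rd d → ℝ≥0∞} (hg : Measurable g) (n : ℕ) :
    ∫⁻ x : Fin n → Rd d, lpExp g (Finset.univ.image x) ≤ (1 + ∫⁻ y, g y) ^ n := by
  rcases Nat.eq_zero_or_pos d with rfl | hd
  · have hle (x : Fin n → Rd 0) : lpExp g (Finset.univ.image x) ≤ (1 + g 0) ^ n :=
      calc lpExp g (Finset.univ.image x) ≤ (1 + g 0) ^ (Finset.univ.image x).card :=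
            Finset.prod_le_pow_card _ _ _ fun y _ => by
              rw [Subsingleton.elim y 0]
              exact le_add_self
        _ ≤ (1 + g 0) ^ n := pow_le_pow_right₀ le_self_add
            (Finset.card_image_le.trans (Finset.card_fin n).le)
    have : IsProbabilityMeasure (volume : Measure (Rd 0)) := ⟨by simp [volume_pi]⟩
    calc ∫⁻ x : Fin n → Rd 0, lpExp g (Finset.univ.image x)
        ≤ ∫⁻ _ : Fin n → Rd 0, (1 + g 0) ^ n := lintegral_mono hle
      _ = (1 + ∫⁻ y, g y) ^ n := by
        rw [lintegral_const, measure_univ, mul_one, lintegral_unique, measure_univ, mul_one]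
        congr!
  · have : Nonempty (Fin d) := ⟨⟨0, hd⟩⟩
    calc ∫⁻ x : Fin n → Rd d, lpExp g (Finset.univ.image x)
        = ∫⁻ x : Fin n → Rd d, ∏ i, g (x i) := by
          refine lintegral_congr_ae ?_
          filter_upwards [ae_injective_pi (volume : Measure (Rd d)) n] with x hx
          rw [lpExp, Finset.prod_image hx.injOn]
      _ = (∫⁻ y, g y) ^ n := lintegral_pi_prod_eq_pow volume hg n
      _ ≤ (1 + ∫⁻ y, g y) ^ n := pow_le_pow_left₀ zero_le le_add_self n

theorem lintegral_lpExp_lambdaLP_le {z : ℝ} (hz : 0 ≤ z) {g : Rd d → ℝ≥0∞} (hg : Measurable g)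
    {D : ℝ≥0} (hD : ∫⁻ y, g y ≤ D) :
    ∫⁻ η, lpExp g η ∂lambdaLP d z ≤ ENNReal.ofReal (Real.exp (z * (1 + D))) := by
  have himage (n : ℕ) : Measurable fun x : Fin n → Rd d => Finset.univ.image x :=
    measurable_finset_image (fun i => measurable_pi_apply i) Finset.univ
  calc ∫⁻ η, lpExp g η ∂lambdaLP d z
      = ∑' n : ℕ, ENNReal.ofReal (z ^ n / n.factorial) *
          ∫⁻ x : Fin n → Rd d, lpExp g (Finset.univ.image x) := by
        rw [lambdaLP, lintegral_sum_measure]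
        refine tsum_congr fun n => ?_
        rw [lintegral_smul_measure, lintegral_map (measurable_lpExp hg) (himage n), smul_eq_mul]
    _ ≤ ∑' n : ℕ, ENNReal.ofReal (z ^ n / n.factorial) * (1 + D) ^ n := by
        gcongr with n
        exact (lintegral_lpExp_image_le hg n).trans (by gcongr)
    _ = ∑' n : ℕ, ENNReal.ofReal ((z * (1 + D)) ^ n / n.factorial) := by
        refine tsum_congr fun n => ?_
        rw [mul_pow, mul_div_right_comm, ENNReal.ofReal_mul (by positivity),
          ENNReal.ofReal_pow (by positivity), ENNReal.ofReal_add (p := 1) zero_le_one D.coe_nonneg,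
          ENNReal.ofReal_one, ENNReal.ofReal_coe_nnreal]
    _ = ENNReal.ofReal (Real.exp (z * (1 + D))) := by
        rw [← ENNReal.ofReal_tsum_of_nonneg (fun n => by positivity)
          (Real.summable_pow_div_factorial _), Real.exp_eq_exp_ℝ,
          (NormedSpace.expSeries_div_hasSum_exp _).tsum_eq]

/-- The measure with correlation function `C ^ |η|` with respect to `λ_z`: the largest one that
the Ruelle bound with constant `C` allows. -/
def ruelleMeasure (d : ℕ) (z : ℝ) (C : ℝ≥0) : Measure (Finset (Rd d)) :=
  (lambdaLP d z).withDensity fun η => (C : ℝ≥0∞) ^ η.card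

instance (z : ℝ) : SFinite (lambdaLP d z) := by
  unfold lambdaLP
  infer_instance

instance (z : ℝ) (C : ℝ≥0) : SFinite (ruelleMeasure d z C) := by
  unfold ruelleMeasure
  infer_instance

theorem lintegral_lpExp_ruelleMeasure_le {z : ℝ} (hz : 0 ≤ z) (C : ℝ≥0) {g : Rd d → ℝ≥0∞}
    (hg : Measurable g) {D : ℝ≥0} (hD : ∫⁻ y, g y ≤ D) :
    ∫⁻ η, lpExp g η ∂ruelleMeasure d z C ≤ ENNReal.ofReal (Real.exp (z * (1 + C * D))) := by
  have hCg : ∫⁻ y, C * g y ≤ (C * D : ℝ≥0) := by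
    rw [lintegral_const_mul _ hg, ENNReal.coe_mul]
    gcongr
  rw [ruelleMeasure, lintegral_withDensity_eq_lintegral_mul _
    (measurable_finset_card.const_pow _) (measurable_lpExp hg)]
  convert lintegral_lpExp_lambdaLP_le hz (hg.const_mul _) hCg using 2 with η
  · simp [lpExp, Finset.prod_mul_distrib]
  · rw [NNReal.coe_mul]

theorem lintegral_lintegral_mul_lpExp_lt_top {X : Type*} [MeasurableSpace X] {σ : Measure X}
    [SFinite σ] {z : ℝ} (hz : 0 ≤ z) (C : ℝ≥0) {v : X → ℝ≥0∞} (hv : Measurable v)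
    (hv_fin : ∫⁻ x, v x ∂σ < ⊤) {h : X → Rd d → ℝ≥0∞} (hh : Measurable (Function.uncurry h))
    {D : ℝ≥0} (hD : ∀ x, ∫⁻ y, h x y ≤ D) :
    ∫⁻ η, ∫⁻ x, v x * lpExp (h x) η ∂σ ∂ruelleMeasure d z C < ⊤ := by
  rw [lintegral_lintegral_swap (measurable_mul_lpExp hv hh).aemeasurable]
  calc ∫⁻ x, ∫⁻ η, v x * lpExp (h x) η ∂ruelleMeasure d z C ∂σ
      ≤ ∫⁻ x, v x * ENNReal.ofReal (Real.exp (z * (1 + C * D))) ∂σ := by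
        refine lintegral_mono fun x => ?_
        have hhx : Measurable (h x) := hh.comp measurable_prodMk_left
        rw [lintegral_const_mul _ (measurable_lpExp hhx)]
        gcongr
        exact lintegral_lpExp_ruelleMeasure_le hz C hhx (hD x)
    _ < ⊤ := by
        rw [lintegral_mul_const _ hv]
        exact ENNReal.mul_lt_top hv_fin ENNReal.ofReal_lt_top

theorem exists_subset_closedBall_and_card_le (η : Finset (Rd d)) :
    ∃ n : ℕ, (η : Set (Rd d)) ⊆ Metric.closedBall 0 n ∧ η.card ≤ n := by
  obtain ⟨R, hR⟩ := η.finite_toSet.isBounded.subset_closedBall (0 : Rd d)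
  obtain ⟨m, hm⟩ := exists_nat_ge R
  refine ⟨max m η.card, hR.trans (Metric.closedBall_subset_closedBall (hm.trans ?_)),
    le_max_right _ _⟩
  exact_mod_cast le_max_left _ _

theorem IsCorrelationMeasure.lintegral_Ktrans {μ : Measure (Config d)}
    {ρ : Measure (Finset (Rd d))} (hρ : IsCorrelationMeasure μ ρ) {G : Finset (Rd d) → ℝ≥0∞}
    (hG : Measurable G) : ∫⁻ γ, Ktrans G γ ∂μ = ∫⁻ η, G η ∂ρ := by
  let size (η : Finset (Rd d)) : ℕ := Nat.find (exists_subset_closedBall_and_card_le η)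
  have hsize : Measurable size :=
    measurable_find exists_subset_closedBall_and_card_le fun n =>
      (measurableSet_coe_subset measurableSet_closedBall).inter
        (measurable_finset_card (measurableSet_Iic (a := n)))
  let H (n : ℕ) (η : Finset (Rd d)) : ℝ≥0∞ := if size η = n then G η else 0
  have hH (n : ℕ) : Measurable (H n) :=
    Measurable.ite (hsize (measurableSet_singleton n)) hG measurable_const
  have hKH (n : ℕ) : Measurable fun γ => Ktrans (H n) γ :=
    measurable_Ktrans measurable_id ((hH n).comp measurable_snd)
  have hsum (η : Finset (Rd d)) : ∑' n, H n η = G η := by simp [H]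
  have hK (γ : Config d) : Ktrans G γ = ∑' n, Ktrans (H n) γ :=
    (tsum_congr fun η => (hsum _).symm).trans ENNReal.tsum_comm
  simp_rw [hK, ← hsum]
  rw [lintegral_tsum fun n => (hKH n).aemeasurable, lintegral_tsum fun n => (hH n).aemeasurable]
  refine tsum_congr fun n => (hρ (H n) (hH n) ⟨n, Metric.closedBall 0 n,
    isCompact_closedBall _ _, fun η hη => if_neg ?_⟩).symm
  rintro rfl
  exact hη (Nat.find_spec (exists_subset_closedBall_and_card_le η))

/-! ### Combinatorics of the K-transform -/

section Moebius

variable {α R : Type*} [CommRing R]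

/-- The inverse `K`-transform `(K⁻¹F)(η) = ∑_{ξ ⊆ η} (-1)^{|η ∖ ξ|} F ξ`. -/
def Kinv (F : Finset α → R) (η : Finset α) : R :=
  ∑ ξ ∈ η.powerset, (-1) ^ (η.card - ξ.card) * F ξ

theorem Kinv_prod_mul_sum_powerset [DecidableEq α] (e : α → R) (a : Finset α → R) (η : Finset α) :
    Kinv (fun ξ => (∏ y ∈ ξ, e y) * ∑ ζ ∈ ξ.powerset, a ζ) η =
      ∑ ζ ∈ η.powerset, a ζ * ((∏ y ∈ ζ, e y) * ∏ y ∈ η \ ζ, (e y - 1)) := by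
  have hinner (ζ : Finset α) (hζ : ζ ⊆ η) :
      ∑ ξ ∈ Finset.Icc ζ η, (-1) ^ (η.card - ξ.card) * ∏ y ∈ ξ, e y =
        (∏ y ∈ ζ, e y) * ∏ y ∈ η \ ζ, (e y - 1) := by
    simp only [sub_eq_add_neg]
    rw [Finset.prod_add, Finset.mul_sum, Finset.Icc_eq_image_powerset hζ, Finset.sum_image]
    · refine Finset.sum_congr rfl fun τ hτ => ?_
      have hτ' := Finset.mem_powerset.1 hτ
      have hdisj : Disjoint ζ τ := (Finset.subset_sdiff.1 hτ').2.symm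
      rw [Finset.prod_const, Finset.prod_union hdisj, Finset.card_union_of_disjoint hdisj,
        Finset.card_sdiff_of_subset hτ', Finset.card_sdiff_of_subset hζ, Nat.sub_sub]
      ring
    · intro τ hτ τ' hτ' h
      have hdisj {σ : Finset α} (hσ : σ ∈ ((η \ ζ).powerset : Set (Finset α))) : Disjoint ζ σ :=
        (Finset.subset_sdiff.1 (Finset.mem_powerset.1 hσ)).2.symm
      rw [← Finset.union_sdiff_cancel_left (hdisj hτ), ← Finset.union_sdiff_cancel_left (hdisj hτ')]
      exact congrArg (· \ ζ) h
  simp only [Kinv, Finset.mul_sum]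
  rw [Finset.sum_comm' (t' := η.powerset) (s' := fun ζ => Finset.Icc ζ η)]
  · refine Finset.sum_congr rfl fun ζ hζ => ?_
    rw [← hinner ζ (Finset.mem_powerset.1 hζ), Finset.mul_sum]
    exact Finset.sum_congr rfl fun ξ _ => by ring
  · intro ξ ζ
    simp only [Finset.mem_powerset, Finset.mem_Icc]
    exact ⟨fun h => ⟨⟨h.2, h.1⟩, h.2.trans h.1⟩, fun h => ⟨h.1.2, h.1.1⟩⟩

theorem Kinv_sum_powerset (a : Finset α → R) (η : Finset α) :
    Kinv (fun ξ => ∑ ζ ∈ ξ.powerset, a ζ) η = a η := by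
  classical
  have h := Kinv_prod_mul_sum_powerset (fun _ => 1) a η
  simp only [Finset.prod_const_one, one_mul, sub_self, Finset.prod_const] at h
  rw [h, Finset.sum_eq_single_of_mem η (Finset.mem_powerset_self η)]
  · simp
  · intro ζ hζ hne
    have hcard : (η \ ζ).card ≠ 0 := fun h0 =>
      hne (Finset.Subset.antisymm (Finset.mem_powerset.1 hζ)
        (Finset.sdiff_eq_empty_iff_subset.1 (Finset.card_eq_zero.1 h0)))
    rw [zero_pow hcard, mul_zero]

end Moebius

/-- `G` vanishes on the finite configurations that are not contained in `Λ`. -/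
def SupportedIn {M : Type*} [Zero M] (G : Finset (Rd d) → M) (Λ : Set (Rd d)) : Prop :=
  ∀ η : Finset (Rd d), ¬ (η : Set (Rd d)) ⊆ Λ → G η = 0

theorem SupportedIn.comp_insert {M : Type*} [Zero M] {G : Finset (Rd d) → M} {Λ : Set (Rd d)}
    (hG : SupportedIn G Λ) (x : Rd d) : SupportedIn (fun ζ => G (insert x ζ)) Λ :=
  fun _ hζ => hG _ fun h => hζ fun _ hy => h (Finset.mem_insert_of_mem hy)

/-- The finitely many points of `γ` in the compact set `Λ`. -/
def Config.pointsIn (γ : Config d) {Λ : Set (Rd d)} (hΛ : IsCompact Λ) : Finset (Rd d) :=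
  (γ.2 Λ hΛ).toFinset

theorem Config.coe_pointsIn (γ : Config d) {Λ : Set (Rd d)} (hΛ : IsCompact Λ) :
    (γ.pointsIn hΛ : Set (Rd d)) = γ.1 ∩ Λ :=
  Set.Finite.coe_toFinset _

theorem Config.coe_pointsIn_subset (γ : Config d) {Λ : Set (Rd d)} (hΛ : IsCompact Λ) :
    (γ.pointsIn hΛ : Set (Rd d)) ⊆ γ.1 :=
  (γ.coe_pointsIn hΛ).trans_subset Set.inter_subset_left

section Ktrans

variable {M : Type*} [TopologicalSpace M]

theorem Ktrans_eq_sum_powerset [AddCommMonoid M] {G : Finset (Rd d) → M} {γ : Config d}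
    {s : Finset (Rd d)} (hs : (s : Set (Rd d)) ⊆ γ.1)
    (hG : ∀ η : Finset (Rd d), (η : Set (Rd d)) ⊆ γ.1 → ¬ η ⊆ s → G η = 0) :
    Ktrans G γ = ∑ η ∈ s.powerset, G η := by
  have hsum : Ktrans G γ = ∑' η, {η : Finset (Rd d) | (η : Set (Rd d)) ⊆ γ.1}.indicator G η :=
    tsum_subtype _ G
  rw [hsum, tsum_eq_sum (s := s.powerset)]
  · refine Finset.sum_congr rfl fun η hη => Set.indicator_of_mem ?_ G
    exact (Finset.coe_subset.2 (Finset.mem_powerset.1 hη)).trans hs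
  · refine fun η hη => Set.indicator_apply_eq_zero.2 fun hηγ => ?_
    exact hG η hηγ (hη ∘ Finset.mem_powerset.2)

theorem Ktrans_ofFinset [AddCommMonoid M] (G : Finset (Rd d) → M) (ξ : Finset (Rd d)) :
    Ktrans G (Config.ofFinset ξ) = ∑ ζ ∈ ξ.powerset, G ζ :=
  Ktrans_eq_sum_powerset subset_rfl fun _ hη hne => absurd (Finset.coe_subset.1 hη) hne

variable [AddCommGroup M] {G : Finset (Rd d) → M} {Λ : Set (Rd d)}

theorem SupportedIn.Ktrans_eq_sum_pointsIn (hG : SupportedIn G Λ) (hΛ : IsCompact Λ)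
    (γ : Config d) : Ktrans G γ = ∑ η ∈ (γ.pointsIn hΛ).powerset, G η := by
  refine Ktrans_eq_sum_powerset (γ.coe_pointsIn_subset hΛ) fun η hηγ hne => hG η fun hηΛ => hne ?_
  rw [← Finset.coe_subset, γ.coe_pointsIn hΛ]
  exact Set.subset_inter hηγ hηΛ

theorem SupportedIn.Ktrans_erasePt (hG : SupportedIn G Λ) (hΛ : IsCompact Λ) (γ : Config d)
    (x : Rd d) : Ktrans G (γ.erasePt x) =
      ∑ η ∈ (γ.pointsIn hΛ).powerset with x ∉ η, G η := by
  have hpts : (γ.erasePt x).pointsIn hΛ = (γ.pointsIn hΛ).erase x := by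
    rw [← Finset.coe_inj, Finset.coe_erase, Config.coe_pointsIn, Config.coe_pointsIn,
      Set.inter_sdiff_right_comm]
    rfl
  rw [hG.Ktrans_eq_sum_pointsIn hΛ, hpts]
  congr 1
  ext η
  rw [Finset.mem_filter, Finset.mem_powerset, Finset.mem_powerset, Finset.subset_erase]

theorem SupportedIn.Ktrans_insertPt_sub (hG : SupportedIn G Λ) (hΛ : IsCompact Λ)
    {γ : Config d} {x : Rd d} (hx : x ∉ γ.1) :
    Ktrans G (γ.insertPt x) - Ktrans G γ = Ktrans (fun ζ => G (insert x ζ)) γ := by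
  have hmem {y : Rd d} (hyγ : y ∈ γ.1) (hyΛ : y ∈ Λ) : y ∈ γ.pointsIn hΛ := by
    rw [← Finset.mem_coe, γ.coe_pointsIn hΛ]
    exact ⟨hyγ, hyΛ⟩
  have hinsert : Ktrans G (γ.insertPt x) = ∑ η ∈ (insert x (γ.pointsIn hΛ)).powerset, G η := by
    refine Ktrans_eq_sum_powerset ?_ fun η hηγ hne => hG η fun hηΛ => hne fun y hy => ?_
    · rw [Finset.coe_insert]
      exact Set.insert_subset_insert (γ.coe_pointsIn_subset hΛ)
    · exact Finset.mem_insert.2 ((hηγ hy).imp_right fun hyγ => hmem hyγ (hηΛ hy))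
  rw [hinsert, (hG.comp_insert x).Ktrans_eq_sum_pointsIn hΛ, hG.Ktrans_eq_sum_pointsIn hΛ,
    Finset.sum_powerset_insert fun h => hx (γ.coe_pointsIn_subset hΛ h), add_sub_cancel_left]

theorem SupportedIn.tsum_Ktrans_erasePt_sub (hG : SupportedIn G Λ) (hΛ : IsCompact Λ)
    (γ : Config d) : ∑' x : γ.1, (Ktrans G (γ.erasePt x) - Ktrans G γ) =
      -Ktrans (fun ζ => ζ.card • G ζ) γ := by
  have hcard : SupportedIn (fun ζ => ζ.card • G ζ) Λ := fun η hη => by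
    simp only [hG η hη, smul_zero]
  have hdiff (x : Rd d) : Ktrans G (γ.erasePt x) - Ktrans G γ =
      -∑ ζ ∈ (γ.pointsIn hΛ).powerset with x ∈ ζ, G ζ := by
    rw [hG.Ktrans_erasePt hΛ, hG.Ktrans_eq_sum_pointsIn hΛ,
      ← Finset.sum_filter_add_sum_filter_not (γ.pointsIn hΛ).powerset (x ∈ ·),
      sub_add_cancel_right]
  have hsupp {x : Rd d} (hx : x ∉ γ.pointsIn hΛ) :
      ∑ ζ ∈ (γ.pointsIn hΛ).powerset with x ∈ ζ, G ζ = 0 := by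
    refine Finset.sum_eq_zero fun ζ hζ => absurd ?_ hx
    obtain ⟨hζs, hxζ⟩ := Finset.mem_filter.1 hζ
    exact Finset.mem_powerset.1 hζs hxζ
  simp_rw [hdiff]
  rw [tsum_subtype γ.1 fun x => -∑ ζ ∈ (γ.pointsIn hΛ).powerset with x ∈ ζ, G ζ,
    tsum_eq_sum (s := γ.pointsIn hΛ) fun x hx => by simp [Set.indicator, hsupp hx],
    Finset.sum_congr rfl fun x hx => Set.indicator_of_mem (γ.coe_pointsIn_subset hΛ hx) _,
    Finset.sum_neg_distrib, hcard.Ktrans_eq_sum_pointsIn hΛ]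
  simp_rw [Finset.sum_filter]
  rw [Finset.sum_comm]
  congr 1
  refine Finset.sum_congr rfl fun ζ hζ => ?_
  rw [← Finset.sum_filter, Finset.sum_const, Finset.filter_mem_eq_inter,
    Finset.inter_eq_right.2 (Finset.mem_powerset.1 hζ)]

end Ktrans

/-! ### Boltzmann factors and the Mayer function -/

theorem enorm_finset_prod {ι R : Type*} [NormedCommRing R] [NormMulClass R] [NormOneClass R]
    (s : Finset ι) (f : ι → R) : ‖∏ i ∈ s, f i‖ₑ = ∏ i ∈ s, ‖f i‖ₑ := by
  simp only [enorm_eq_nnnorm, nnnorm_prod, ENNReal.ofNNReal_finsetProd]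

theorem measurable_expNegE : Measurable expNegE :=
  Measurable.ite (measurableSet_singleton _) measurable_const
    (Real.measurable_exp.comp (measurable_neg.comp measurable_ereal_toReal))

namespace PairPotential

variable (V : PairPotential d)

/-- The Boltzmann factor `e^{-φ}`. The value at the origin is irrelevant for the dynamics; it is
set to `0` so that `∏ y ∈ ξ, V.boltzmann (x - y)` vanishes when `x ∈ ξ`. -/
def boltzmann (u : Rd d) : ℝ := if u = 0 then 0 else expNegE (V.toFun u)

/-- The absolute value `|e^{-φ} - 1|` of the Mayer function. -/
def mayer (u : Rd d) : ℝ≥0∞ := ‖V.boltzmann u - 1‖ₑ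

theorem measurable_mayer : Measurable V.mayer :=
  ((Measurable.ite (measurableSet_singleton 0) measurable_const
    (measurable_expNegE.comp V.measurable')).sub_const 1).enorm

theorem prod_boltzmann_sub_eq_zero {x : Rd d} {ξ : Finset (Rd d)} (hx : x ∈ ξ) :
    ∏ y ∈ ξ, V.boltzmann (x - y) = 0 :=
  Finset.prod_eq_zero hx (by rw [sub_self, boltzmann, if_pos rfl])

theorem enorm_boltzmann_le (u : Rd d) : ‖V.boltzmann u‖ₑ ≤ 1 + V.mayer u := by
  simpa [mayer, add_comm] using enorm_add_le (V.boltzmann u - 1) 1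

theorem lintegral_mayer_lt_top {V : PairPotential d} (hI : CondI V) : ∫⁻ u, V.mayer u < ⊤ := by
  have hle (u : Rd d) : V.mayer u ≤
      ENNReal.ofReal |1 - expNegE (V.toFun u)| + ({0} : Set (Rd d)).indicator 1 u := by
    by_cases hu : u = 0
    · simp [mayer, boltzmann, hu]
    · simp [mayer, boltzmann, hu, ← Real.enorm_eq_ofReal_abs, enorm_sub_rev]
  calc ∫⁻ u, V.mayer u
      ≤ ∫⁻ u, (ENNReal.ofReal |1 - expNegE (V.toFun u)| + ({0} : Set (Rd d)).indicator 1 u) :=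
        lintegral_mono hle
    _ = (∫⁻ u, ENNReal.ofReal |1 - expNegE (V.toFun u)|) + volume {(0 : Rd d)} := by
        rw [lintegral_add_right _ (measurable_one.indicator (measurableSet_singleton 0)),
          lintegral_indicator_one (measurableSet_singleton 0)]
    _ < ⊤ := ENNReal.add_lt_top.2 ⟨hI, isCompact_singleton.measure_lt_top⟩

/-- The function `w` tilted by the interaction with `x`, determined by
`1 + V.tilt w x y = (1 + V.mayer (x - y)) * (1 + w y)`. -/
def tilt (w : Rd d → ℝ≥0∞) (x y : Rd d) : ℝ≥0∞ :=
  (1 + V.mayer (x - y)) * w y + V.mayer (x - y)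

theorem one_add_tilt (w : Rd d → ℝ≥0∞) (x y : Rd d) :
    1 + V.tilt w x y = (1 + V.mayer (x - y)) * (1 + w y) := by
  rw [tilt]
  ring

theorem measurable_tilt {w : Rd d → ℝ≥0∞} (hw : Measurable w) :
    Measurable (Function.uncurry (V.tilt w)) := by
  have hmayer : Measurable fun p : Rd d × Rd d => V.mayer (p.1 - p.2) :=
    V.measurable_mayer.comp (measurable_fst.sub measurable_snd)
  exact ((hmayer.const_add 1).mul (hw.comp measurable_snd)).add hmayer

theorem lintegral_tilt_le {w : Rd d → ℝ≥0∞} (hw : Measurable w) {c : ℝ≥0∞}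
    (hwc : ∀ y, w y ≤ c) (x : Rd d) :
    ∫⁻ y, V.tilt w x y ≤ (∫⁻ y, w y) + (1 + c) * ∫⁻ u, V.mayer u := by
  have hmayer : Measurable fun y => V.mayer (x - y) :=
    V.measurable_mayer.comp (measurable_const.sub measurable_id)
  calc ∫⁻ y, V.tilt w x y
      ≤ ∫⁻ y, (w y + (1 + c) * V.mayer (x - y)) := by
        refine lintegral_mono fun y => ?_
        calc V.tilt w x y = w y + (1 + w y) * V.mayer (x - y) := by rw [tilt]; ring
          _ ≤ w y + (1 + c) * V.mayer (x - y) := by gcongr; exact hwc y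
    _ = (∫⁻ y, w y) + (1 + c) * ∫⁻ u, V.mayer u := by
        rw [lintegral_add_left hw, lintegral_const_mul _ hmayer,
          lintegral_sub_left_eq_self V.mayer x]

end PairPotential

theorem expNegRelEnergy_nonneg (V : PairPotential d) (x : Rd d) (γ : Set (Rd d)) :
    0 ≤ expNegRelEnergy V x γ := by
  unfold expNegRelEnergy
  split_ifs
  · exact (Real.exp_pos _).le
  · exact le_rfl

theorem exp_neg_sum_toReal_eq_prod_boltzmann (V : PairPotential d) {x : Rd d}
    {ξ : Finset (Rd d)} (hx : x ∉ ξ) :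
    Real.exp (-∑ y ∈ ξ, (V.toFun (x - y)).toReal) = ∏ y ∈ ξ, V.boltzmann (x - y) := by
  rw [← Finset.sum_neg_distrib, Real.exp_sum]
  refine Finset.prod_congr rfl fun y hy => ?_
  have hxy : x - y ≠ 0 := sub_ne_zero.2 fun h => hx (h ▸ hy)
  rw [PairPotential.boltzmann, if_neg hxy, expNegE, if_neg (V.finite_off_zero' _ hxy)]

theorem expNegRelEnergy_coe_finset (V : PairPotential d) {x : Rd d} {ξ : Finset (Rd d)}
    (hx : x ∉ ξ) : expNegRelEnergy V x ξ = ∏ y ∈ ξ, V.boltzmann (x - y) := by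
  have hne : ∀ y ∈ (ξ : Set (Rd d)), V.toFun (x - y) ≠ ⊤ := fun y hy =>
    V.finite_off_zero' _ (sub_ne_zero.2 fun h => hx (h ▸ hy))
  rw [expNegRelEnergy, if_pos ⟨hne, (hasSum_fintype _).summable⟩,
    ← exp_neg_sum_toReal_eq_prod_boltzmann V hx]
  congr 2
  exact Finset.tsum_subtype ξ fun y => (V.toFun (x - y)).toReal

theorem ofReal_expNegRelEnergy_mul_le (V : PairPotential d) {x : Rd d} {γ : Set (Rd d)}
    (hx : x ∉ γ) {s : Finset (Rd d)} (hs : (s : Set (Rd d)) ⊆ γ) {a b : ℝ≥0∞}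
    (h : ∀ t : Finset (Rd d), s ⊆ t → (t : Set (Rd d)) ⊆ γ →
      (∏ y ∈ t, ‖V.boltzmann (x - y)‖ₑ) * a ≤ b) :
    ENNReal.ofReal (expNegRelEnergy V x γ) * a ≤ b := by
  unfold expNegRelEnergy
  split_ifs with hγ
  swap
  · simp
  have hlim : Filter.Tendsto (fun t : Finset γ =>
      ENNReal.ofReal (Real.exp (-∑ y ∈ t, (V.toFun (x - y)).toReal)) * a) Filter.atTop
      (nhds (ENNReal.ofReal (Real.exp (-∑' y : γ, (V.toFun (x - y)).toReal)) * a)) :=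
    ENNReal.Tendsto.mul_const
      (ENNReal.tendsto_ofReal (Filter.Tendsto.neg hγ.2.of_abs.hasSum).rexp)
      (.inl (ENNReal.ofReal_pos.2 (Real.exp_pos _)).ne')
  refine le_of_tendsto hlim ?_
  filter_upwards [Filter.eventually_ge_atTop (s.subtype (· ∈ γ))] with t hst
  let t' : Finset (Rd d) := t.map (Function.Embedding.subtype _)
  have ht'γ : (t' : Set (Rd d)) ⊆ γ := fun y hy => by
    obtain ⟨y, _, rfl⟩ := Finset.mem_map.1 (Finset.mem_coe.1 hy)
    exact y.2
  have hst' : s ⊆ t' := fun y hy =>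
    Finset.mem_map.2 ⟨⟨y, hs hy⟩, hst (Finset.mem_subtype.2 hy), rfl⟩
  have hsum : ∑ y ∈ t, (V.toFun (x - y)).toReal = ∑ y ∈ t', (V.toFun (x - y)).toReal :=
    (Finset.sum_map t (Function.Embedding.subtype _) fun y => (V.toFun (x - y)).toReal).symm
  rw [← Real.enorm_eq_ofReal (Real.exp_nonneg _), hsum,
    exp_neg_sum_toReal_eq_prod_boltzmann V fun hxt => hx (ht'γ hxt), enorm_finset_prod]
  exact h t' hst' ht'γ

theorem measurableSet_forall_mem {X : Type*} [MeasurableSpace X] {g : X → Config d}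
    (hg : Measurable g) {S : Set (X × Rd d)} (hS : MeasurableSet S) :
    MeasurableSet {p | ∀ y ∈ (g p).1, (p, y) ∈ S} := by
  have hcount : Measurable fun p => ∑' y : (g p).1, Sᶜ.indicator (1 : X × Rd d → ℝ≥0∞) (p, y) :=
    Config.measurable_tsum_points hg (h := fun p y => Sᶜ.indicator (1 : X × Rd d → ℝ≥0∞) (p, y))
      (measurable_one.indicator hS.compl)
  convert hcount (measurableSet_singleton 0) using 1
  ext p
  simp [ENNReal.tsum_eq_zero]

theorem measurableSet_summable_abs {X : Type*} [MeasurableSpace X] {g : X → Config d}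
    (hg : Measurable g) {h : X → Rd d → ℝ} (hh : Measurable (Function.uncurry h)) :
    MeasurableSet {p | Summable fun y : (g p).1 => |h p y|} := by
  have hsum : Measurable fun p => ∑' y : (g p).1, ‖h p y‖ₑ :=
    Config.measurable_tsum_points hg (h := fun p y => ‖h p y‖ₑ) hh.enorm
  convert hsum (measurableSet_singleton ⊤).compl using 1
  ext p
  exact (tsum_enorm_ne_top_iff_summable_norm (f := fun y : (g p).1 => h p y)).symm

theorem measurable_expNegRelEnergy (V : PairPotential d) :
    Measurable fun p : Config d × Rd d => expNegRelEnergy V p.2 p.1.1 := by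
  have hV : Measurable fun q : (Config d × Rd d) × Rd d => V.toFun (q.1.2 - q.2) :=
    V.measurable'.comp (measurable_fst.snd.sub measurable_snd)
  have hVr : Measurable (Function.uncurry fun (p : Config d × Rd d) y =>
      (V.toFun (p.2 - y)).toReal) := measurable_ereal_toReal.comp hV
  have hne : MeasurableSet {p : Config d × Rd d | ∀ y ∈ p.1.1, V.toFun (p.2 - y) ≠ ⊤} :=
    measurableSet_forall_mem measurable_fst (hV (measurableSet_singleton ⊤).compl)
  have hsummable : MeasurableSet {p : Config d × Rd d |
      Summable fun y : p.1.1 => |(V.toFun (p.2 - y)).toReal|} :=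
    measurableSet_summable_abs (h := fun p y => (V.toFun (p.2 - y)).toReal) measurable_fst hVr
  have hexp : Measurable fun p : Config d × Rd d =>
      Real.exp (-∑' y : p.1.1, (V.toFun (p.2 - y)).toReal) :=
    Real.measurable_exp.comp (Config.measurable_tsum_points measurable_fst hVr).neg
  exact Measurable.ite (hne.inter hsummable) hexp measurable_const

/-! ### The Glauber generator on K-transforms -/

/-- The rate at which the generator creates a particle at `x`, applied to the observable `KG`:
`e^{-E(x,γ)} (KG(γ ∪ {x}) - KG(γ))`. -/
def birth (V : PairPotential d) (G : Finset (Rd d) → ℝ) (γ : Config d) (x : Rd d) : ℝ :=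
  expNegRelEnergy V x γ.1 * (Ktrans G (γ.insertPt x) - Ktrans G γ)

section Birth

variable {V : PairPotential d} {G : Finset (Rd d) → ℝ} {Λ : Set (Rd d)} {x : Rd d}
  {γ : Config d}

theorem birth_of_mem (hx : x ∈ γ.1) : birth V G γ x = 0 := by
  have hγ : γ.insertPt x = γ := Subtype.ext (Set.insert_eq_of_mem hx)
  rw [birth, hγ, sub_self, mul_zero]

theorem SupportedIn.birth_of_notMem (hG : SupportedIn G Λ) (hΛ : IsCompact Λ) (hx : x ∉ γ.1) :
    birth V G γ x = expNegRelEnergy V x γ.1 * Ktrans (fun ζ => G (insert x ζ)) γ := by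
  rw [birth, hG.Ktrans_insertPt_sub hΛ hx]

theorem birth_ofFinset (V : PairPotential d) (G : Finset (Rd d) → ℝ) (ξ : Finset (Rd d))
    (x : Rd d) : birth V G (Config.ofFinset ξ) x =
      (∏ y ∈ ξ, V.boltzmann (x - y)) * ∑ ζ ∈ ξ.powerset, G (insert x ζ) := by
  by_cases hx : x ∈ ξ
  · rw [birth_of_mem (Finset.mem_coe.2 hx), V.prod_boltzmann_sub_eq_zero hx, zero_mul]
  · have hins : (Config.ofFinset ξ).insertPt x = Config.ofFinset (insert x ξ) :=
      Subtype.ext (Finset.coe_insert x ξ).symm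
    have hE : expNegRelEnergy V x (Config.ofFinset ξ).1 = ∏ y ∈ ξ, V.boltzmann (x - y) :=
      expNegRelEnergy_coe_finset V hx
    rw [birth, hE, hins, Ktrans_ofFinset, Ktrans_ofFinset, Finset.sum_powerset_insert hx,
      add_sub_cancel_left]

theorem SupportedIn.measurable_birth (hGm : Measurable G) (hG : SupportedIn G Λ)
    (hΛ : IsCompact Λ) : Measurable (Function.uncurry (birth V G)) := by
  have hins : Measurable fun q : (Config d × Rd d) × Finset (Rd d) => G (insert q.1.2 q.2) :=
    hGm.comp (measurable_finset_insert.comp (measurable_fst.snd.prodMk measurable_snd))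
  have hmem : MeasurableSet {p : Config d × Rd d | p.2 ∈ p.1.1} :=
    Config.measurableSet_mem.preimage measurable_swap
  have hite : Function.uncurry (birth V G) = fun p => if p.2 ∈ p.1.1 then 0 else
      expNegRelEnergy V p.2 p.1.1 * Ktrans (fun ζ => G (insert p.2 ζ)) p.1 := by
    funext p
    split_ifs with hp
    · exact birth_of_mem hp
    · exact hG.birth_of_notMem hΛ hp
  rw [hite]
  exact Measurable.ite hmem measurable_const ((measurable_expNegRelEnergy V).mul
    (measurable_Ktrans measurable_fst (G := fun p ζ => G (insert p.2 ζ)) hins))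

theorem SupportedIn.glauber_Ktrans (hG : SupportedIn G Λ) (hΛ : IsCompact Λ) (z : ℝ)
    (γ : Config d) : glauber V z (Ktrans G) γ =
      Ktrans (fun ζ => ζ.card • G ζ) γ - z * ∫ x, birth V G γ x := by
  rw [glauber, hG.tsum_Ktrans_erasePt_sub hΛ, neg_add_rev, neg_neg, neg_add_eq_sub]
  rfl

theorem measurable_card_smul (hGm : Measurable G) : Measurable fun ζ => ζ.card • G ζ := by
  simp only [nsmul_eq_mul]
  exact (measurable_from_top.comp measurable_finset_card).mul hGm

theorem SupportedIn.measurable_glauber_Ktrans (hGm : Measurable G) (hG : SupportedIn G Λ)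
    (hΛ : IsCompact Λ) (z : ℝ) : Measurable (glauber V z (Ktrans G)) := by
  rw [funext (hG.glauber_Ktrans (V := V) hΛ z)]
  exact (measurable_Ktrans (G := fun _ ζ => ζ.card • G ζ) measurable_id
    ((measurable_card_smul hGm).comp measurable_snd)).sub
    ((hG.measurable_birth hGm hΛ).stronglyMeasurable.integral_prod_right.measurable.const_mul z)

theorem measurable_Kinv {F : Finset (Rd d) → ℝ} (hF : Measurable F) : Measurable (Kinv F) := by
  have hsign : Measurable fun p : Finset (Rd d) × Finset (Rd d) =>
      (-1 : ℝ) ^ (p.1.card - p.2.card) :=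
    (measurable_from_top (f := fun n : ℕ => (-1 : ℝ) ^ n)).comp
      ((measurable_finset_card.comp measurable_fst).sub
        (measurable_finset_card.comp measurable_snd))
  have hK : Kinv F = fun η => Ktrans (fun ξ => (-1) ^ (η.card - ξ.card) * F ξ)
      (Config.ofFinset η) := funext fun η => (Ktrans_ofFinset _ η).symm
  rw [hK]
  exact measurable_Ktrans Config.measurable_ofFinset (hsign.mul (hF.comp measurable_snd))

theorem SupportedIn.measurable_hatH (hGm : Measurable G) (hG : SupportedIn G Λ)
    (hΛ : IsCompact Λ) (z : ℝ) : Measurable (hatH V z G) :=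
  measurable_Kinv ((hG.measurable_glauber_Ktrans hGm hΛ z).comp Config.measurable_ofFinset)

theorem SupportedIn.hatH_eq (hG : SupportedIn G Λ) (hΛ : IsCompact Λ) (z : ℝ)
    {η : Finset (Rd d)} (hη : ∀ ξ ⊆ η, Integrable (birth V G (Config.ofFinset ξ))) :
    hatH V z G η =
      η.card • G η - z * ∫ x, Kinv (fun ξ => birth V G (Config.ofFinset ξ) x) η := by
  have hint : ∫ x, Kinv (fun ξ => birth V G (Config.ofFinset ξ) x) η =
      Kinv (fun ξ => ∫ x, birth V G (Config.ofFinset ξ) x) η := by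
    simp only [Kinv]
    rw [integral_finsetSum _ fun ξ hξ => (hη ξ (Finset.mem_powerset.1 hξ)).const_mul _]
    simp only [integral_const_mul]
  rw [hint, ← Kinv_sum_powerset (fun ζ => ζ.card • G ζ) η]
  simp only [hatH, Kinv, hG.glauber_Ktrans hΛ, Ktrans_ofFinset, mul_sub, Finset.sum_sub_distrib,
    Finset.mul_sum, mul_left_comm z]

end Birth

/-! ### Majorants -/

theorem sum_powerset_lpExp (w : Rd d → ℝ≥0∞) (s : Finset (Rd d)) :
    ∑ ζ ∈ s.powerset, lpExp w ζ = ∏ y ∈ s, (1 + w y) :=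
  (Finset.prod_one_add s).symm

theorem sum_powerset_le_Ktrans (G : Finset (Rd d) → ℝ≥0∞) {γ : Config d} {t : Finset (Rd d)}
    (ht : (t : Set (Rd d)) ⊆ γ.1) : ∑ ζ ∈ t.powerset, G ζ ≤ Ktrans G γ := by
  have hsub {ζ : Finset (Rd d)} (hζ : ζ ∈ t.powerset) : (ζ : Set (Rd d)) ⊆ γ.1 :=
    (Finset.coe_subset.2 (Finset.mem_powerset.1 hζ)).trans ht
  calc ∑ ζ ∈ t.powerset, G ζ
      = ∑ ζ ∈ t.powerset, {ζ : Finset (Rd d) | (ζ : Set (Rd d)) ⊆ γ.1}.indicator G ζ :=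
        Finset.sum_congr rfl fun ζ hζ => (Set.indicator_of_mem (hsub hζ) G).symm
    _ ≤ ∑' ζ, {ζ : Finset (Rd d) | (ζ : Set (Rd d)) ⊆ γ.1}.indicator G ζ := ENNReal.sum_le_tsum _
    _ = Ktrans G γ := (tsum_subtype _ G).symm

theorem prod_boltzmann_mul_prod_one_add_le (V : PairPotential d) (w : Rd d → ℝ≥0∞) (x : Rd d)
    {s t : Finset (Rd d)} (hst : s ⊆ t) :
    (∏ y ∈ t, ‖V.boltzmann (x - y)‖ₑ) * ∏ y ∈ s, (1 + w y) ≤ ∏ y ∈ t, (1 + V.tilt w x y) :=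
  calc (∏ y ∈ t, ‖V.boltzmann (x - y)‖ₑ) * ∏ y ∈ s, (1 + w y)
      ≤ (∏ y ∈ t, (1 + V.mayer (x - y))) * ∏ y ∈ t, (1 + w y) :=
        mul_le_mul' (Finset.prod_le_prod' fun y _ => V.enorm_boltzmann_le (x - y))
          (Finset.prod_le_prod_of_subset_of_one_le' hst fun _ _ _ => le_self_add)
    _ = ∏ y ∈ t, (1 + V.tilt w x y) := by
        simp only [V.one_add_tilt, Finset.prod_mul_distrib]

/-- The majorant of `Ĥ G`, up to a constant factor, when `|G|` is dominated by the exponential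
`lpExp w`: its two terms account for the deaths and for the births. -/
def majorant (V : PairPotential d) (z : ℝ) (w : Rd d → ℝ≥0∞) (η : Finset (Rd d)) : ℝ≥0∞ :=
  lpExp (fun y => 2 * w y) η + ‖z‖ₑ * ∫⁻ x, w x * lpExp (V.tilt w x) η

section Majorant

variable {V : PairPotential d} {G : Finset (Rd d) → ℝ} {Λ : Set (Rd d)} {w : Rd d → ℝ≥0∞}
  {L : ℝ≥0∞}

theorem enorm_card_smul_le (hGw : ∀ η, ‖G η‖ₑ ≤ L * lpExp w η) (ζ : Finset (Rd d)) :
    ‖ζ.card • G ζ‖ₑ ≤ L * lpExp (fun y => 2 * w y) ζ := by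
  have hcard : ‖(ζ.card : ℝ)‖ₑ ≤ 2 ^ ζ.card := by
    rw [Real.enorm_natCast]
    exact_mod_cast Nat.lt_two_pow_self.le
  calc ‖ζ.card • G ζ‖ₑ ≤ 2 ^ ζ.card * (L * lpExp w ζ) := by
        rw [nsmul_eq_mul, enorm_mul]
        exact mul_le_mul' hcard (hGw ζ)
    _ = L * lpExp (fun y => 2 * w y) ζ := by
        rw [lpExp, lpExp, Finset.prod_mul_distrib, Finset.prod_const]
        ring

theorem enorm_insert_le (hGw : ∀ η, ‖G η‖ₑ ≤ L * lpExp w η) {x : Rd d} {ζ : Finset (Rd d)}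
    (hx : x ∉ ζ) : ‖G (insert x ζ)‖ₑ ≤ L * (w x * lpExp w ζ) := by
  simpa only [lpExp, Finset.prod_insert hx] using hGw (insert x ζ)

theorem SupportedIn.enorm_birth_le (hG : SupportedIn G Λ) (hΛ : IsCompact Λ)
    (hGw : ∀ η, ‖G η‖ₑ ≤ L * lpExp w η) (γ : Config d) (x : Rd d) :
    ‖birth V G γ x‖ₑ ≤ L * (w x * Ktrans (lpExp (V.tilt w x)) γ) := by
  by_cases hx : x ∈ γ.1
  · simp [birth_of_mem hx]
  let s := γ.pointsIn hΛ
  have hs : (s : Set (Rd d)) ⊆ γ.1 := γ.coe_pointsIn_subset hΛ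
  have hK : ‖Ktrans (fun ζ => G (insert x ζ)) γ‖ₑ ≤ L * w x * ∏ y ∈ s, (1 + w y) := by
    rw [(hG.comp_insert x).Ktrans_eq_sum_pointsIn hΛ, ← sum_powerset_lpExp, Finset.mul_sum]
    refine (enorm_sum_le _ _).trans (Finset.sum_le_sum fun ζ hζ => ?_)
    rw [mul_assoc]
    exact enorm_insert_le hGw fun hxζ => hx (hs (Finset.mem_powerset.1 hζ hxζ))
  rw [hG.birth_of_notMem hΛ hx, enorm_mul, Real.enorm_eq_ofReal (expNegRelEnergy_nonneg V x γ.1),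
    ← mul_assoc L]
  refine (mul_le_mul_right hK _).trans ?_
  rw [mul_left_comm]
  refine mul_le_mul_right (ofReal_expNegRelEnergy_mul_le V hx hs fun t hst ht => ?_) _
  calc (∏ y ∈ t, ‖V.boltzmann (x - y)‖ₑ) * ∏ y ∈ s, (1 + w y)
      ≤ ∏ y ∈ t, (1 + V.tilt w x y) := prod_boltzmann_mul_prod_one_add_le V w x hst
    _ = ∑ ζ ∈ t.powerset, lpExp (V.tilt w x) ζ := (sum_powerset_lpExp _ t).symm
    _ ≤ Ktrans (lpExp (V.tilt w x)) γ := sum_powerset_le_Ktrans _ ht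

theorem enorm_Kinv_birth_le (hGw : ∀ η, ‖G η‖ₑ ≤ L * lpExp w η) (x : Rd d)
    (η : Finset (Rd d)) :
    ‖Kinv (fun ξ => birth V G (Config.ofFinset ξ) x) η‖ₑ ≤
      L * (w x * lpExp (V.tilt w x) η) := by
  have hterm (ζ : Finset (Rd d)) :
      ‖G (insert x ζ) * ((∏ y ∈ ζ, V.boltzmann (x - y)) *
          ∏ y ∈ η \ ζ, (V.boltzmann (x - y) - 1))‖ₑ ≤
        L * w x * ((∏ y ∈ ζ, (1 + V.mayer (x - y)) * w y) * ∏ y ∈ η \ ζ, V.mayer (x - y)) := by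
    by_cases hx : x ∈ ζ
    · simp [V.prod_boltzmann_sub_eq_zero hx]
    calc _ ≤ L * (w x * lpExp w ζ) * ((∏ y ∈ ζ, (1 + V.mayer (x - y))) *
          ∏ y ∈ η \ ζ, V.mayer (x - y)) := by
          rw [enorm_mul, enorm_mul, enorm_finset_prod, enorm_finset_prod]
          exact mul_le_mul' (enorm_insert_le hGw hx) (mul_le_mul_left
            (Finset.prod_le_prod' fun y _ => V.enorm_boltzmann_le (x - y)) _)
      _ = _ := by
          rw [Finset.prod_mul_distrib, lpExp]
          ring
  simp only [birth_ofFinset]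
  rw [Kinv_prod_mul_sum_powerset]
  calc _ ≤ ∑ ζ ∈ η.powerset, L * w x * ((∏ y ∈ ζ, (1 + V.mayer (x - y)) * w y) *
        ∏ y ∈ η \ ζ, V.mayer (x - y)) :=
        (enorm_sum_le _ _).trans (Finset.sum_le_sum fun ζ _ => hterm ζ)
    _ = L * (w x * lpExp (V.tilt w x) η) := by
        rw [← Finset.mul_sum, ← Finset.prod_add, mul_assoc]
        rfl

theorem Ktrans_majorant (V : PairPotential d) (z : ℝ) (hw : Measurable w) (γ : Config d) :
    Ktrans (majorant V z w) γ = Ktrans (lpExp fun y => 2 * w y) γ +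
      ‖z‖ₑ * ∫⁻ x, w x * Ktrans (lpExp (V.tilt w x)) γ := by
  have hF (η : Finset (Rd d)) : Measurable fun x => w x * lpExp (V.tilt w x) η :=
    (measurable_mul_lpExp hw (V.measurable_tilt hw)).comp (measurable_prodMk_left (x := η))
  have hK := Ktrans_lintegral (ν := volume) hF γ
  simp only [Ktrans, ENNReal.tsum_mul_left] at hK
  simp only [Ktrans, majorant]
  rw [ENNReal.tsum_add, ENNReal.tsum_mul_left, hK]

theorem SupportedIn.enorm_glauber_Ktrans_le (hG : SupportedIn G Λ) (hΛ : IsCompact Λ) (z : ℝ)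
    (hw : Measurable w) (hGw : ∀ η, ‖G η‖ₑ ≤ L * lpExp w η) (γ : Config d) :
    ‖glauber V z (Ktrans G) γ‖ₑ ≤ L * Ktrans (majorant V z w) γ := by
  have hdeath : ‖Ktrans (fun ζ => ζ.card • G ζ) γ‖ₑ ≤ L * Ktrans (lpExp fun y => 2 * w y) γ :=
    calc _ ≤ Ktrans (fun ζ => ‖ζ.card • G ζ‖ₑ) γ := enorm_tsum_le_tsum_enorm
      _ ≤ Ktrans (fun ζ => L * lpExp (fun y => 2 * w y) ζ) γ :=
        ENNReal.tsum_le_tsum fun ζ => enorm_card_smul_le hGw ζ.1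
      _ = _ := ENNReal.tsum_mul_left
  have hKm : Measurable fun x => w x * Ktrans (lpExp (V.tilt w x)) γ :=
    hw.mul (measurable_Ktrans measurable_const (measurable_lpExp_param (V.measurable_tilt hw)))
  have hbirth : ‖∫ x, birth V G γ x‖ₑ ≤ L * ∫⁻ x, w x * Ktrans (lpExp (V.tilt w x)) γ :=
    calc _ ≤ ∫⁻ x, ‖birth V G γ x‖ₑ := enorm_integral_le_lintegral_enorm _
      _ ≤ ∫⁻ x, L * (w x * Ktrans (lpExp (V.tilt w x)) γ) :=
        lintegral_mono fun x => hG.enorm_birth_le hΛ hGw γ x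
      _ = _ := lintegral_const_mul _ hKm
  rw [hG.glauber_Ktrans hΛ, Ktrans_majorant V z hw, mul_add, mul_left_comm]
  refine enorm_sub_le.trans (add_le_add hdeath ?_)
  rw [enorm_mul]
  exact mul_le_mul_right hbirth _

theorem SupportedIn.enorm_hatH_le (hG : SupportedIn G Λ) (hΛ : IsCompact Λ) (z : ℝ)
    (hw : Measurable w) (hGw : ∀ η, ‖G η‖ₑ ≤ L * lpExp w η) {η : Finset (Rd d)}
    (hη : ∀ ξ ⊆ η, Integrable (birth V G (Config.ofFinset ξ))) :
    ‖hatH V z G η‖ₑ ≤ L * majorant V z w η := by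
  have hm : Measurable fun x => w x * lpExp (V.tilt w x) η :=
    (measurable_mul_lpExp hw (V.measurable_tilt hw)).comp (measurable_prodMk_left (x := η))
  have hbirth : ‖∫ x, Kinv (fun ξ => birth V G (Config.ofFinset ξ) x) η‖ₑ ≤
      L * ∫⁻ x, w x * lpExp (V.tilt w x) η :=
    calc _ ≤ ∫⁻ x, ‖Kinv (fun ξ => birth V G (Config.ofFinset ξ) x) η‖ₑ :=
          enorm_integral_le_lintegral_enorm _
      _ ≤ ∫⁻ x, L * (w x * lpExp (V.tilt w x) η) :=
        lintegral_mono fun x => enorm_Kinv_birth_le hGw x η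
      _ = _ := lintegral_const_mul _ hm
  rw [hG.hatH_eq hΛ z hη, majorant, mul_add, mul_left_comm]
  refine enorm_sub_le.trans (add_le_add (enorm_card_smul_le hGw η) ?_)
  rw [enorm_mul]
  exact mul_le_mul_right hbirth _

end Majorant

/-! ### Integrability -/

section Integrability

variable {V : PairPotential d} {w : Rd d → ℝ≥0∞} {c : ℝ≥0} {z : ℝ}

theorem PairPotential.exists_lintegral_tilt_le (hI : CondI V) (hw : Measurable w)
    (hwc : ∀ y, w y ≤ c) (hw_fin : ∫⁻ y, w y < ⊤) :
    ∃ D : ℝ≥0, ∀ x, ∫⁻ y, V.tilt w x y ≤ D := by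
  have hfin : (∫⁻ y, w y) + (1 + c) * ∫⁻ u, V.mayer u < ⊤ := ENNReal.add_lt_top.2
    ⟨hw_fin, ENNReal.mul_lt_top (by finiteness) (lintegral_mayer_lt_top hI)⟩
  refine ⟨_, fun x => (V.lintegral_tilt_le hw hwc x).trans (ENNReal.coe_toNNReal hfin.ne).ge⟩

theorem measurable_majorant (V : PairPotential d) (z : ℝ) (hw : Measurable w) :
    Measurable (majorant V z w) :=
  (measurable_lpExp (hw.const_mul 2)).add
    ((measurable_mul_lpExp hw (V.measurable_tilt hw)).lintegral_prod_right'.const_mul _)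

theorem lintegral_majorant_ruelleMeasure_lt_top (hI : CondI V) (hz : 0 ≤ z) (C : ℝ≥0)
    (hw : Measurable w) (hwc : ∀ y, w y ≤ c) (hw_fin : ∫⁻ y, w y < ⊤) :
    ∫⁻ η, majorant V z w η ∂ruelleMeasure d z C < ⊤ := by
  obtain ⟨D, hD⟩ := PairPotential.exists_lintegral_tilt_le hI hw hwc hw_fin
  have hw2 : ∫⁻ y, 2 * w y < ⊤ := by
    rw [lintegral_const_mul _ hw]
    finiteness
  have hdeath : ∫⁻ η, lpExp (fun y => 2 * w y) η ∂ruelleMeasure d z C < ⊤ :=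
    (lintegral_lpExp_ruelleMeasure_le hz C (hw.const_mul 2)
      (ENNReal.coe_toNNReal hw2.ne).ge).trans_lt ENNReal.ofReal_lt_top
  have hbirth := lintegral_lintegral_mul_lpExp_lt_top hz C hw hw_fin (V.measurable_tilt hw) hD
  simp only [majorant]
  rw [lintegral_add_left (measurable_lpExp (hw.const_mul 2)), lintegral_const_mul']
  · finiteness
  · finiteness

variable {G : Finset (Rd d) → ℝ} {Λ : Set (Rd d)} {L : ℝ≥0}

theorem SupportedIn.integrable_birth_ofFinset (hGm : Measurable G) (hG : SupportedIn G Λ)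
    (hΛ : IsCompact Λ) (hGw : ∀ η, ‖G η‖ₑ ≤ L * lpExp w η) {ξ : Finset (Rd d)}
    (hξ : ∫⁻ x, w x * lpExp (1 + V.tilt w x) ξ < ⊤) :
    Integrable (birth V G (Config.ofFinset ξ)) := by
  refine ⟨((hG.measurable_birth hGm hΛ).comp measurable_prodMk_left).aestronglyMeasurable, ?_⟩
  have hle (x : Rd d) : ‖birth V G (Config.ofFinset ξ) x‖ₑ ≤
      L * (w x * lpExp (1 + V.tilt w x) ξ) := by
    have h := hG.enorm_birth_le (V := V) hΛ hGw (Config.ofFinset ξ) x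
    rwa [Ktrans_ofFinset, sum_powerset_lpExp] at h
  calc ∫⁻ x, ‖birth V G (Config.ofFinset ξ) x‖ₑ
      ≤ ∫⁻ x, L * (w x * lpExp (1 + V.tilt w x) ξ) := lintegral_mono hle
    _ = L * ∫⁻ x, w x * lpExp (1 + V.tilt w x) ξ := lintegral_const_mul' _ _ ENNReal.coe_ne_top
    _ < ⊤ := ENNReal.mul_lt_top ENNReal.coe_lt_top hξ

theorem ae_lintegral_mul_lpExp_one_add_tilt_lt_top (hI : CondI V) (hz : 0 ≤ z) (C : ℝ≥0)
    (hw : Measurable w) (hwc : ∀ y, w y ≤ c) (hw_fin : ∫⁻ y, w y < ⊤) :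
    ∀ᵐ η ∂ruelleMeasure d z C, ∀ ξ ⊆ η, ∫⁻ x, w x * lpExp (1 + V.tilt w x) ξ < ⊤ := by
  obtain ⟨D, hD⟩ := PairPotential.exists_lintegral_tilt_le hI hw hwc hw_fin
  let ball (n : ℕ) : Set (Rd d) := Metric.closedBall 0 n
  let cutoff (n : ℕ) (x : Rd d) : Rd d → ℝ≥0∞ := (ball n).indicator (1 + V.tilt w x)
  have hcutoff (n : ℕ) : Measurable (Function.uncurry (cutoff n)) :=
    ((V.measurable_tilt hw).const_add 1).indicator
      (measurableSet_closedBall.preimage measurable_snd)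
  have hcutoff_le (n : ℕ) (x : Rd d) :
      ∫⁻ y, cutoff n x y ≤ ((volume (ball n)).toNNReal + D : ℝ≥0) :=
    calc ∫⁻ y, cutoff n x y = ∫⁻ y in ball n, (1 + V.tilt w x y) :=
          lintegral_indicator measurableSet_closedBall _
      _ = volume (ball n) + ∫⁻ y in ball n, V.tilt w x y := by
          rw [lintegral_add_left measurable_const, setLIntegral_one]
      _ ≤ volume (ball n) + D := by
          gcongr
          exact (setLIntegral_le_lintegral _ _).trans (hD x)
      _ = ((volume (ball n)).toNNReal + D : ℝ≥0) := by
          rw [ENNReal.coe_add, ENNReal.coe_toNNReal measure_closedBall_lt_top.ne]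
  have hae : ∀ᵐ η ∂ruelleMeasure d z C, ∀ n, ∫⁻ x, w x * lpExp (cutoff n x) η < ⊤ :=
    ae_all_iff.2 fun n =>
      ae_lt_top (measurable_mul_lpExp hw (hcutoff n)).lintegral_prod_right'
        (lintegral_lintegral_mul_lpExp_lt_top hz C hw hw_fin (hcutoff n) (hcutoff_le n)).ne
  filter_upwards [hae] with η hη ξ hξ
  obtain ⟨n, hn, -⟩ := exists_subset_closedBall_and_card_le η
  refine (lintegral_mono fun x => mul_le_mul_right ?_ _).trans_lt (hη n)
  calc lpExp (1 + V.tilt w x) ξ ≤ lpExp (1 + V.tilt w x) η :=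
        Finset.prod_le_prod_of_subset_of_one_le' hξ fun _ _ _ => le_self_add
    _ ≤ lpExp (cutoff n x) η :=
        lpExp_mono fun y hy => (Set.indicator_of_mem (hn hy) (1 + V.tilt w x)).ge

theorem SupportedIn.integrable_hatH (hGm : Measurable G) (hG : SupportedIn G Λ)
    (hΛ : IsCompact Λ) (hI : CondI V) (hz : 0 ≤ z) (C : ℝ≥0) (hw : Measurable w)
    (hwc : ∀ y, w y ≤ c) (hw_fin : ∫⁻ y, w y < ⊤) (hGw : ∀ η, ‖G η‖ₑ ≤ L * lpExp w η) :
    Integrable (hatH V z G) (ruelleMeasure d z C) := by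
  refine ⟨(hG.measurable_hatH hGm hΛ z).aestronglyMeasurable, ?_⟩
  have hle : ∀ᵐ η ∂ruelleMeasure d z C, ‖hatH V z G η‖ₑ ≤ L * majorant V z w η := by
    filter_upwards [ae_lintegral_mul_lpExp_one_add_tilt_lt_top hI hz C hw hwc hw_fin] with η hη
    exact hG.enorm_hatH_le hΛ z hw hGw fun ξ hξ =>
      hG.integrable_birth_ofFinset hGm hΛ hGw (hη ξ hξ)
  calc ∫⁻ η, ‖hatH V z G η‖ₑ ∂ruelleMeasure d z C
      ≤ ∫⁻ η, L * majorant V z w η ∂ruelleMeasure d z C := lintegral_mono_ae hle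
    _ = L * ∫⁻ η, majorant V z w η ∂ruelleMeasure d z C :=
        lintegral_const_mul' _ _ ENNReal.coe_ne_top
    _ < ⊤ := ENNReal.mul_lt_top ENNReal.coe_lt_top
        (lintegral_majorant_ruelleMeasure_lt_top hI hz C hw hwc hw_fin)

theorem SupportedIn.integrable_glauber_Ktrans (hGm : Measurable G) (hG : SupportedIn G Λ)
    (hΛ : IsCompact Λ) {μ : Measure (Config d)} {ρ : Measure (Finset (Rd d))}
    (hρ : IsCorrelationMeasure μ ρ) (hw : Measurable w) (hGw : ∀ η, ‖G η‖ₑ ≤ L * lpExp w η)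
    (hfin : ∫⁻ η, majorant V z w η ∂ρ < ⊤) : Integrable (glauber V z (Ktrans G)) μ := by
  refine ⟨(hG.measurable_glauber_Ktrans hGm hΛ z).aestronglyMeasurable, ?_⟩
  calc ∫⁻ γ, ‖glauber V z (Ktrans G) γ‖ₑ ∂μ
      ≤ ∫⁻ γ, L * Ktrans (majorant V z w) γ ∂μ :=
        lintegral_mono fun γ => hG.enorm_glauber_Ktrans_le hΛ z hw hGw γ
    _ = L * ∫⁻ η, majorant V z w η ∂ρ := by
        rw [lintegral_const_mul' _ _ ENNReal.coe_ne_top,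
          hρ.lintegral_Ktrans (measurable_majorant V z hw)]
    _ < ⊤ := ENNReal.mul_lt_top ENNReal.coe_lt_top hfin

theorem SupportedIn.enorm_le_mul_lpExp_indicator (hG : SupportedIn G Λ)
    (hGb : ∀ η, ‖G η‖₊ ≤ L * c ^ η.card) (η : Finset (Rd d)) :
    ‖G η‖ₑ ≤ L * lpExp (Λ.indicator fun _ => (c : ℝ≥0∞)) η := by
  by_cases hη : (η : Set (Rd d)) ⊆ Λ
  · rw [lpExp, Finset.prod_congr rfl fun y hy => Set.indicator_of_mem (hη hy) _,
      Finset.prod_const]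
    exact_mod_cast hGb η
  · simp [hG η hη]

end Integrability

theorem withDensity_le_ruelleMeasure (z : ℝ) {k : Finset (Rd d) → ℝ} {C : ℝ} (hC : 0 ≤ C)
    (hk : ∀ η, k η ≤ C ^ η.card) :
    (lambdaLP d z).withDensity (fun η => ENNReal.ofReal (k η)) ≤
      ruelleMeasure d z C.toNNReal := by
  refine withDensity_mono (.of_forall fun η => ?_)
  exact (ENNReal.ofReal_le_ofReal (hk η)).trans_eq (ENNReal.ofReal_pow hC _)

theorem BddSupp.exists_supportedIn {G : Finset (Rd d) → ℝ} (hG : BddSupp G) :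
    ∃ (Λ : Set (Rd d)) (L : ℝ≥0), IsCompact Λ ∧ SupportedIn G Λ ∧ ∀ η, ‖G η‖₊ ≤ L := by
  obtain ⟨-, L, N, Λ, hΛ, hL, hsupp⟩ := hG
  exact ⟨Λ, L.toNNReal, hΛ, fun η hη => hsupp η fun h => hη h.1, fun η =>
    NNReal.le_toNNReal_of_coe_le (hL η)⟩

theorem hatH_integrable_general {V : PairPotential d} (hI : CondI V) {z : ℝ} (hz : 0 ≤ z)
    {μ : Measure (Config d)} {ρ : Measure (Finset (Rd d))} (hρ : IsCorrelationMeasure μ ρ)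
    {C : ℝ≥0} (hρ_le : ρ ≤ ruelleMeasure d z C) {G : Finset (Rd d) → ℝ} (hGm : Measurable G)
    {Λ : Set (Rd d)} (hΛ : IsCompact Λ) (hG : SupportedIn G Λ) {L c : ℝ≥0}
    (hGb : ∀ η, ‖G η‖₊ ≤ L * c ^ η.card) :
    Integrable (hatH V z G) ρ ∧ Integrable (glauber V z (Ktrans G)) μ := by
  let w : Rd d → ℝ≥0∞ := Λ.indicator fun _ => c
  have hw : Measurable w := measurable_const.indicator hΛ.measurableSet
  have hwc : ∀ y, w y ≤ c := fun y => Set.indicator_le_self' (fun _ _ => zero_le) y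
  have hw_fin : ∫⁻ y, w y < ⊤ := by
    rw [lintegral_indicator_const hΛ.measurableSet]
    exact ENNReal.mul_lt_top ENNReal.coe_lt_top hΛ.measure_lt_top
  have hGw : ∀ η, ‖G η‖ₑ ≤ L * lpExp w η := hG.enorm_le_mul_lpExp_indicator hGb
  have hfin := lintegral_majorant_ruelleMeasure_lt_top hI hz C hw hwc hw_fin
  exact ⟨(hG.integrable_hatH hGm hΛ hI hz C hw hwc hw_fin hGw).mono_measure hρ_le,
    hG.integrable_glauber_Ktrans hGm hΛ hρ hw hGw ((lintegral_mono' hρ_le le_rfl).trans_lt hfin)⟩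

end

/-- **Proposition.** For a pair potential satisfying (I) and (S) and a measure
`μ ∈ M¹_fm(Γ)` whose correlation measure has density `k_μ` w.r.t. `λ_z` satisfying
the Ruelle bound, `Ĥ(B_bs(Γ₀)) ⊂ L¹(Γ₀,ρ_μ)`; consequently the Glauber generator `H`
maps `FP_bc(Γ) = K(B_bs(Γ₀))` into `L¹(Γ,μ)`. -/
theorem hatH_integrable {d : ℕ} (V : PairPotential d) (B : ℝ)
    (hS : Stable V B) (hI : CondI V) (z : ℝ) (hz : 0 < z)
    (μ : Measure (Config d)) (hμ : HasFiniteLocalMoments μ)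
    (ρ : Measure (Finset (Rd d))) (hρ : IsCorrelationMeasure μ ρ)
    (k : Finset (Rd d) → ℝ) (hk_meas : Measurable k) (hk_nonneg : ∀ η, 0 ≤ k η)
    (hk_dens : ρ = (lambdaLP d z).withDensity fun η => ENNReal.ofReal (k η))
    (hRB : ∃ C > 0, ∀ η : Finset (Rd d), k η ≤ C ^ η.card) :
    (∀ G : Finset (Rd d) → ℝ, BddSupp G → Integrable (hatH V z G) ρ) ∧
      (∀ G : Finset (Rd d) → ℝ, BddSupp G →
        Integrable (glauber V z (Ktrans G)) μ) := by
  obtain ⟨C, hC, hk⟩ := hRB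
  have hρ_le : ρ ≤ ruelleMeasure d z C.toNNReal :=
    hk_dens ▸ withDensity_le_ruelleMeasure z hC.le hk
  have hmain (G : Finset (Rd d) → ℝ) (hG : BddSupp G) :
      Integrable (hatH V z G) ρ ∧ Integrable (glauber V z (Ktrans G)) μ := by
    obtain ⟨Λ, L, hΛ, hsupp, hL⟩ := hG.exists_supportedIn
    exact hatH_integrable_general (c := 1) hI hz.le hρ hρ_le hG.1 hΛ hsupp (by simpa using hL)
  exact ⟨fun G hG => (hmain G hG).1, fun G hG => (hmain G hG).2⟩
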